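/- There exists a universal constant κ ∈ [2,∞) with the following property. Let q ∈ [2,∞), n ∈ ℕ, and let (X,‖·‖_X) and (Y,‖·‖_Y) be Banach spaces with dim(X)=n and m_q(Y)<∞. Let |·| be any Hilbertian norm on X, identifying X with ℝ^n. Set γ := I_q(X)/(√n·M(X)) and K := κ·n^{1/4}·m_q(Y)·√(I_q(X)M(X)). Then every compactly supported Lipschitz function f:ℝ^n→Y satisfies (∫_{ℝ^n} ∫_0^∞ fint_{x+tB_X} ‖f(y) − Taylor¹_x(H_{γt²}f)(y)‖_Y^q / t^{q+1} dy dt dx)^{1/q} ≤ K·|supp(f)|^{1/q}·‖f‖_{Lip(X,Y)}. -/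

import Mathlib

open MeasureTheory Metric Set ENNReal

noncomputable section

universe u

/-- `N` is a norm on the real vector space `V`. -/
def IsNorm {V : Type*} [AddCommGroup V] [Module ℝ V] (N : V → ℝ) : Prop :=
  (∀ x, N x = 0 → x = 0) ∧ (∀ (a : ℝ) (x : V), N (a • x) = |a| * N x) ∧
    (∀ x y : V, N (x + y) ≤ N x + N y)

/-- `m` is an upper bound for the martingale cotype `q` constant `𝔪_q(Y)` of `Y`. -/
def MartCotypeBound (q : ℝ) (Y : Type*) [NormedAddCommGroup Y] [NormedSpace ℝ Y]
    [CompleteSpace Y] (m : ℝ) : Prop :=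
  ∀ (Ω : Type) [MeasurableSpace Ω] (μ : Measure Ω) [IsProbabilityMeasure μ]
    (ℱ : Filtration ℕ ‹MeasurableSpace Ω›) (M : ℕ → Ω → Y), Martingale M ℱ μ →
    ∀ B : ℝ≥0∞, (∀ k, ∫⁻ ω, (‖M k ω‖₊ : ℝ≥0∞) ^ q ∂μ ≤ B) →
      ∑' k : ℕ, ∫⁻ ω, (‖M (k + 1) ω - M k ω‖₊ : ℝ≥0∞) ^ q ∂μ ≤ ENNReal.ofReal m ^ q * B

/-- The average of `N` over the Euclidean unit sphere (the quantity `M(X)`). -/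
def MX {n : ℕ} (N : EuclideanSpace ℝ (Fin n) → ℝ) : ℝ :=
  ⨍ σ : sphere (0 : EuclideanSpace ℝ (Fin n)) 1, N σ
    ∂((volume : Measure (EuclideanSpace ℝ (Fin n))).toSphere)

/-- The quantity `I_q(X) = (⨍_{B_X} |x|^q dx)^{1/q}`. -/
def IqX {n : ℕ} (q : ℝ) (N : EuclideanSpace ℝ (Fin n) → ℝ) : ℝ :=
  (⨍ x in {x : EuclideanSpace ℝ (Fin n) | N x ≤ 1}, ‖x‖ ^ q) ^ (1 / q)

/-- The heat kernel `h_t(x) = (4πt)^{-n/2} e^{-|x|²/(4t)}` on `ℝⁿ`. -/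
def heatKernel (n : ℕ) (t : ℝ) (x : EuclideanSpace ℝ (Fin n)) : ℝ :=
  (4 * Real.pi * t) ^ (-(n : ℝ) / 2) * Real.exp (-‖x‖ ^ 2 / (4 * t))

/-- The heat evolute `H_t f = h_t ∗ f`. -/
def heat {n : ℕ} {Y : Type*} [NormedAddCommGroup Y] [NormedSpace ℝ Y]
    (t : ℝ) (f : EuclideanSpace ℝ (Fin n) → Y) (x : EuclideanSpace ℝ (Fin n)) : Y :=
  ∫ z, heatKernel n t z • f (x - z)

/-- The first-order Taylor polynomial `Taylor¹_x(g)(y) = g(x) + (y-x)·∇g(x)`. -/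
def taylor1 {n : ℕ} {Y : Type*} [NormedAddCommGroup Y] [NormedSpace ℝ Y]
    (g : EuclideanSpace ℝ (Fin n) → Y) (x y : EuclideanSpace ℝ (Fin n)) : Y :=
  g x + ∑ j, (y - x) j • fderiv ℝ g x (EuclideanSpace.single j 1)

/-!
Fix a scale `t`, an increment `w ∈ B_X`, and split
`f (x + t w) - Taylor¹_x (H_{γt²} f) (x + t w)` into the first-order Taylor remainder of
`H_{γt²} f` at `x` and `(f - H_{γt²} f) (x + t w)`. Telescoping over dyadic times (upwards for
the Taylor remainder, downwards for `f - H_{γt²} f`) expresses both through the Littlewood–Paley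
pieces `∂_w (H_u - H_{3u}) f`, and smoothing by the heat kernel makes the resulting series
geometric.

The square function `(∫ ‖∂_w (H_u - H_{3u}) f‖_q^q du/u)^{1/q}` is controlled by martingale cotype:
for a random walk `S` with independent heat increments of times `r / 2^k`, the sequence
`k ↦ H_{r/2^k} F (x - S_{k+1})` is a martingale, and averaging its differences over the last
increment produces `(H_u - H_{3u}) F` at `u = r / 2^{k+1}`. With `F = ∂_w f`, approximated by
difference quotients, the bound is `m L N(w) (2 |supp f|)^{1/q}`.

The Taylor remainder contributes the factor `|w| / √γ`, whose `L_q` average over `B_X` is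
`I_q(X) / √γ`. In `f - H_{γt²} f` the direction `w` is `√γ` times a Gaussian
vector whose mean `N`-norm is of order `√n M(X)`. The choice `γ = I_q(X) / (√n M(X))` balances
the two.
-/

local notation "𝔼" n:max => EuclideanSpace ℝ (Fin n)

/-! ### `L_q` seminorms -/

section Lq

variable {α β ε : Type*} [MeasurableSpace α] [MeasurableSpace β]

theorem lintegral_rpow_le_measure_univ_rpow_mul (μ : Measure α) {q : ℝ} (hq : 1 ≤ q)
    {φ : α → ℝ≥0∞} (hφ : AEMeasurable φ μ) :
    (∫⁻ x, φ x ∂μ) ^ q ≤ μ univ ^ (q - 1) * ∫⁻ x, φ x ^ q ∂μ := by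
  have hq0 : 0 < q := by linarith
  have h := eLpNorm'_le_eLpNorm'_mul_rpow_measure_univ one_pos hq hφ.aestronglyMeasurable
  simp only [eLpNorm', enorm_eq_self, ENNReal.rpow_one, div_one] at h
  calc (∫⁻ x, φ x ∂μ) ^ q
      ≤ ((∫⁻ x, φ x ^ q ∂μ) ^ (1 / q) * μ univ ^ (1 - 1 / q)) ^ q := by gcongr
    _ = μ univ ^ (q - 1) * ∫⁻ x, φ x ^ q ∂μ := by
      rw [ENNReal.mul_rpow_of_nonneg _ _ hq0.le, ← ENNReal.rpow_mul, ← ENNReal.rpow_mul,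
        one_div_mul_cancel hq0.ne', ENNReal.rpow_one, mul_comm, sub_mul, one_mul,
        one_div_mul_cancel hq0.ne']

theorem lintegral_rpow_le_lintegral_rpow (μ : Measure α) [IsProbabilityMeasure μ] {q : ℝ}
    (hq : 1 ≤ q) {φ : α → ℝ≥0∞} (hφ : AEMeasurable φ μ) :
    (∫⁻ x, φ x ∂μ) ^ q ≤ ∫⁻ x, φ x ^ q ∂μ := by
  simpa using lintegral_rpow_le_measure_univ_rpow_mul μ hq hφ

theorem lintegral_mul_rpow_le (μ : Measure α) {q : ℝ} (hq : 1 ≤ q) {w φ : α → ℝ≥0∞}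
    (hw : Measurable w) (hφ : Measurable φ) :
    (∫⁻ x, w x * φ x ∂μ) ^ q ≤ (∫⁻ x, w x ∂μ) ^ (q - 1) * ∫⁻ x, w x * φ x ^ q ∂μ := by
  have h := lintegral_rpow_le_measure_univ_rpow_mul (μ.withDensity w) hq hφ.aemeasurable
  rwa [lintegral_withDensity_eq_lintegral_mul _ hw hφ,
    lintegral_withDensity_eq_lintegral_mul _ hw (hφ.pow_const q),
    withDensity_apply _ MeasurableSet.univ, Measure.restrict_univ] at h

theorem eLpNorm'_rpow [ENorm ε] {q : ℝ} (hq : 0 < q) (f : α → ε) (μ : Measure α) :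
    eLpNorm' f q μ ^ q = ∫⁻ x, ‖f x‖ₑ ^ q ∂μ :=
  (lintegral_rpow_enorm_eq_rpow_eLpNorm' hq).symm

theorem eLpNorm'_le_of_enorm_le [ENorm ε] (μ : Measure α) {q : ℝ} (hq : 0 ≤ q) {φ : α → ε}
    {ψ : α → ℝ≥0∞} (h : ∀ x, ‖φ x‖ₑ ≤ ψ x) : eLpNorm' φ q μ ≤ eLpNorm' ψ q μ :=
  eLpNorm'_mono_enorm_ae hq (.of_forall h)

theorem measurable_eLpNorm' [ENorm ε] (ν : Measure β) [SFinite ν] (q : ℝ) {φ : α → β → ε}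
    (hφ : Measurable fun p : α × β => ‖φ p.1 p.2‖ₑ) : Measurable fun a => eLpNorm' (φ a) q ν :=
  (Measurable.lintegral_prod_right (hφ.pow_const q)).pow_const _

theorem eLpNorm'_prod [ENorm ε] (μ : Measure α) (ν : Measure β) [SFinite ν] {q : ℝ} (hq : 0 < q)
    {φ : α × β → ε} (hφ : Measurable fun p => ‖φ p‖ₑ) :
    eLpNorm' φ q (μ.prod ν) = eLpNorm' (fun a => eLpNorm' (fun b => φ (a, b)) q ν) q μ := by
  rw [eLpNorm'_eq_lintegral_enorm, eLpNorm'_eq_lintegral_enorm]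
  simp only [enorm_eq_self, eLpNorm'_rpow hq]
  rw [lintegral_prod _ (hφ.pow_const q).aemeasurable]

theorem ae_ae_eq_eLpNorm'_mul_div (ρ : Measure β) (μ : Measure α) [SFinite ρ] [SFinite μ]
    {q : ℝ} (hq : 0 < q) {T : β → α → ℝ≥0∞} (hT : Measurable (Function.uncurry T))
    (hfin : ∫⁻ z, eLpNorm' (T z) q μ ∂ρ ≠ ∞) :
    ∀ᵐ x ∂μ, ∀ᵐ z ∂ρ, T z x = eLpNorm' (T z) q μ * (T z x / eLpNorm' (T z) q μ) := by
  have hw : Measurable fun z => eLpNorm' (T z) q μ := measurable_eLpNorm' μ q hT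
  have hw₁ : Measurable fun p : β × α => eLpNorm' (T p.1) q μ := hw.comp measurable_fst
  have hset : MeasurableSet {p : β × α |
      T p.1 p.2 = eLpNorm' (T p.1) q μ * (T p.1 p.2 / eLpNorm' (T p.1) q μ)} :=
    measurableSet_eq_fun hT (hw₁.mul (hT.div hw₁))
  refine (Measure.ae_ae_comm hset).1 ?_
  filter_upwards [ae_lt_top hw hfin] with z hz
  by_cases hz0 : eLpNorm' (T z) q μ = 0
  · have hTz : ∫⁻ x, T z x ^ q ∂μ = 0 := by
      have := eLpNorm'_rpow hq (T z) μ
      rwa [hz0, ENNReal.zero_rpow_of_pos hq, eq_comm] at this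
    rw [lintegral_eq_zero_iff (by fun_prop)] at hTz
    filter_upwards [hTz] with x hx
    simp [(ENNReal.rpow_eq_zero_iff_of_pos hq).1 hx]
  · exact .of_forall fun x => (ENNReal.mul_div_cancel hz0 hz.ne).symm

theorem eLpNorm'_lintegral_le (ρ : Measure β) (μ : Measure α) [SFinite ρ] [SFinite μ] {q : ℝ}
    (hq : 1 ≤ q) {T : β → α → ℝ≥0∞} (hT : Measurable (Function.uncurry T)) :
    eLpNorm' (fun x => ∫⁻ z, T z x ∂ρ) q μ ≤ ∫⁻ z, eLpNorm' (T z) q μ ∂ρ := by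
  have hq0 : 0 < q := by linarith
  set w : β → ℝ≥0∞ := fun z => eLpNorm' (T z) q μ
  have hw : Measurable w := measurable_eLpNorm' μ q hT
  by_cases hfin : ∫⁻ z, w z ∂ρ = ∞
  · exact hfin ▸ le_top
  -- Jensen's inequality is applied to `T z x / w z` under the weight `w z`.
  have hmain : ∫⁻ x, (∫⁻ z, T z x ∂ρ) ^ q ∂μ ≤ (∫⁻ z, w z ∂ρ) ^ q := by
    calc ∫⁻ x, (∫⁻ z, T z x ∂ρ) ^ q ∂μ
        ≤ ∫⁻ x, (∫⁻ z, w z ∂ρ) ^ (q - 1) * ∫⁻ z, w z * (T z x / w z) ^ q ∂ρ ∂μ := by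
          refine lintegral_mono_ae ?_
          filter_upwards [ae_ae_eq_eLpNorm'_mul_div ρ μ hq0 hT hfin] with x hx
          rw [lintegral_congr_ae hx]
          exact lintegral_mul_rpow_le ρ hq hw (hT.of_uncurry_right.div hw)
      _ = (∫⁻ z, w z ∂ρ) ^ (q - 1) * ∫⁻ z, w z * (w z ^ q / w z ^ q) ∂ρ := by
          rw [lintegral_const_mul _ (by fun_prop), lintegral_lintegral_swap (by fun_prop)]
          simp_rw [ENNReal.div_rpow_of_nonneg _ _ hq0.le, div_eq_mul_inv]
          congr 1
          refine lintegral_congr fun z => ?_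
          have hwT : ∫⁻ x, T z x ^ q ∂μ = w z ^ q := (eLpNorm'_rpow hq0 (T z) μ).symm
          rw [lintegral_const_mul _ (by fun_prop), lintegral_mul_const _ (by fun_prop), hwT]
      _ ≤ (∫⁻ z, w z ∂ρ) ^ (q - 1) * ∫⁻ z, w z ∂ρ := by
          gcongr with z
          exact mul_le_of_le_one_right' ENNReal.div_self_le_one
      _ = (∫⁻ z, w z ∂ρ) ^ q := by
          conv_lhs => rw [← ENNReal.rpow_one (∫⁻ z, w z ∂ρ), ← ENNReal.rpow_mul, one_mul,
            ← ENNReal.rpow_add_of_nonneg _ _ (by linarith) zero_le_one, sub_add_cancel]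
  calc eLpNorm' (fun x => ∫⁻ z, T z x ∂ρ) q μ ≤ ((∫⁻ z, w z ∂ρ) ^ q) ^ (1 / q) :=
        ENNReal.rpow_le_rpow hmain (by positivity)
    _ = ∫⁻ z, w z ∂ρ := by rw [one_div, ENNReal.rpow_rpow_inv hq0.ne']

theorem eLpNorm'_tsum_le (μ : Measure α) [SFinite μ] {q : ℝ} (hq : 1 ≤ q) {T : ℕ → α → ℝ≥0∞}
    (hT : ∀ k, Measurable (T k)) :
    eLpNorm' (fun x => ∑' k, T k x) q μ ≤ ∑' k, eLpNorm' (T k) q μ := by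
  simpa [lintegral_count] using eLpNorm'_lintegral_le .count μ hq (T := T)
    (measurable_from_prod_countable_right hT)

theorem eLpNorm'_const_mul (μ : Measure α) {q : ℝ} (hq : 0 < q) (c : ℝ≥0∞) {φ : α → ℝ≥0∞}
    (hφ : Measurable φ) : eLpNorm' (fun x => c * φ x) q μ = c * eLpNorm' φ q μ := by
  simp only [eLpNorm'_eq_lintegral_enorm, enorm_eq_self, ENNReal.mul_rpow_of_nonneg _ _ hq.le]
  rw [lintegral_const_mul _ (hφ.pow_const q), ENNReal.mul_rpow_of_nonneg _ _ (by positivity),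
    one_div, ENNReal.rpow_rpow_inv hq.ne']

theorem eLpNorm'_tsum_mul_le (μ : Measure α) [SFinite μ] {q : ℝ} (hq : 1 ≤ q) (c : ℕ → ℝ≥0∞)
    {φ : ℕ → α → ℝ≥0∞} (hφ : ∀ k, Measurable (φ k)) {B : ℝ≥0∞}
    (hB : ∀ k, eLpNorm' (φ k) q μ ≤ B) :
    eLpNorm' (fun x => ∑' k, c k * φ k x) q μ ≤ (∑' k, c k) * B := by
  refine (eLpNorm'_tsum_le μ hq fun k => (hφ k).const_mul (c k)).trans ?_
  rw [← ENNReal.tsum_mul_right]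
  refine ENNReal.tsum_le_tsum fun k => ?_
  rw [eLpNorm'_const_mul μ (by linarith) (c k) (hφ k)]
  gcongr
  exact hB k

theorem eLpNorm'_comp_sub_right {G : Type*} [AddGroup G] [MeasurableSpace G] [MeasurableAdd G]
    (μ : Measure G) [μ.IsAddRightInvariant] [ENorm ε] (f : G → ε) (q : ℝ) (a : G) :
    eLpNorm' (fun x => f (x - a)) q μ = eLpNorm' f q μ := by
  simp only [eLpNorm'_eq_lintegral_enorm]
  rw [lintegral_sub_right_eq_self fun x => ‖f x‖ₑ ^ q]

theorem eLpNorm'_lintegral_comp_sub_le {G : Type*} [AddGroup G] [MeasurableSpace G]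
    [MeasurableAdd G] [MeasurableSub₂ G] (μ ρ : Measure G) [SFinite μ] [SFinite ρ]
    [μ.IsAddRightInvariant] {q : ℝ} (hq : 1 ≤ q) {φ : G → ℝ≥0∞} (hφ : Measurable φ) :
    eLpNorm' (fun x => ∫⁻ z, φ (x - z) ∂ρ) q μ ≤ ρ univ * eLpNorm' φ q μ := by
  refine (eLpNorm'_lintegral_le ρ μ hq (T := fun z x => φ (x - z))
    (hφ.comp (measurable_snd.sub measurable_fst))).trans_eq ?_
  simp only [eLpNorm'_comp_sub_right μ φ q, lintegral_const]
  exact mul_comm _ _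

end Lq

/-! ### The heat kernel -/

section HeatKernel

theorem heatKernel_nonneg (n : ℕ) {t : ℝ} (ht : 0 < t) (x : 𝔼 n) : 0 ≤ heatKernel n t x := by
  unfold heatKernel
  positivity

theorem continuous_heatKernel (n : ℕ) (t : ℝ) : Continuous (heatKernel n t) := by
  unfold heatKernel
  fun_prop

theorem measurable_heatKernel (n : ℕ) : Measurable (Function.uncurry (heatKernel n)) := by
  unfold heatKernel Function.uncurry
  fun_prop

theorem integral_heatKernel (n : ℕ) {t : ℝ} (ht : 0 < t) : ∫ x, heatKernel n t x = 1 := by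
  have hgauss : ∫ x : 𝔼 n, Real.exp (-‖x‖ ^ 2 / (4 * t)) = (4 * Real.pi * t) ^ ((n : ℝ) / 2) := by
    have h := GaussianFourier.integral_rexp_neg_mul_sq_norm (V := 𝔼 n) (b := 1 / (4 * t))
      (by positivity)
    rw [finrank_euclideanSpace, Fintype.card_fin] at h
    convert h using 3 <;> field_simp
  unfold heatKernel
  rw [integral_const_mul, hgauss, ← Real.rpow_add (by positivity), neg_div, neg_add_cancel,
    Real.rpow_zero]

theorem integrable_heatKernel (n : ℕ) {t : ℝ} (ht : 0 < t) : Integrable (heatKernel n t) :=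
  .of_integral_ne_zero (by simp [integral_heatKernel n ht])

theorem heatKernel_add_mul_heatKernel (n : ℕ) {t : ℝ} (ht : 0 < t) (z v : 𝔼 n) :
    heatKernel n t (z + v) * heatKernel n t z =
      (heatKernel n t (z + (1 / 2 : ℝ) • v) * Real.exp (-‖v‖ ^ 2 / (16 * t))) ^ 2 := by
  have hmid : ‖z + (1 / 2 : ℝ) • v‖ ^ 2 = ‖z‖ ^ 2 + inner ℝ z v + ‖v‖ ^ 2 / 4 := by
    rw [norm_add_sq_real, inner_smul_right, norm_smul]
    norm_num
    ring
  unfold heatKernel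
  generalize (4 * Real.pi * t) ^ (-(n : ℝ) / 2) = A
  rw [mul_mul_mul_comm, ← Real.exp_add, ← pow_two, mul_assoc, ← Real.exp_add, mul_pow,
    ← Real.exp_nat_mul, norm_add_sq_real, hmid]
  congr 2
  push_cast
  field_simp
  ring

theorem abs_sub_le_of_mul_eq_sq {a b d r : ℝ} (ha : 0 ≤ a) (hb : 0 ≤ b) (hd : 0 ≤ d) (hr : 0 < r)
    (h : a * b = d ^ 2) : |a - b| ≤ r / 2 * (a + b - 2 * d) + 1 / r * (a + b) := by
  have hd' : d = √a * √b := by rw [← Real.sqrt_mul ha, h, Real.sqrt_sq hd]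
  set x := √a
  set y := √b
  have hx : x ^ 2 = a := Real.sq_sqrt ha
  have hy : y ^ 2 = b := Real.sq_sqrt hb
  have hfactor : |a - b| = |x - y| * (x + y) := by
    rw [← hx, ← hy, sq_sub_sq, abs_mul, mul_comm, abs_of_nonneg (by positivity : 0 ≤ x + y)]
  have hamgm : |x - y| * (x + y) ≤ r / 2 * (x - y) ^ 2 + 1 / (2 * r) * (x + y) ^ 2 := by
    rw [← sub_nonneg, ← sq_abs (x - y)]
    have : 0 ≤ (r * |x - y| - (x + y)) ^ 2 / (2 * r) := by positivity
    convert this using 1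
    field_simp
    ring
  calc |a - b| ≤ r / 2 * (x - y) ^ 2 + 1 / (2 * r) * (x + y) ^ 2 := hfactor ▸ hamgm
    _ ≤ r / 2 * (x - y) ^ 2 + 1 / (2 * r) * (2 * (x ^ 2 + y ^ 2)) := by
      gcongr
      exact add_sq_le
    _ = r / 2 * (a + b - 2 * d) + 1 / r * (a + b) := by
      rw [← hx, ← hy, hd']
      field_simp
      ring

theorem integral_abs_heatKernel_sub_le_of_pos (n : ℕ) {t : ℝ} (ht : 0 < t) (v : 𝔼 n) {r : ℝ}
    (hr : 0 < r) : ∫ z, |heatKernel n t (z + v) - heatKernel n t z| ≤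
      r * (1 - Real.exp (-‖v‖ ^ 2 / (16 * t))) + 2 / r := by
  set c := Real.exp (-‖v‖ ^ 2 / (16 * t))
  have hint (w : 𝔼 n) : Integrable fun z => heatKernel n t (z + w) :=
    (integrable_heatKernel n ht).comp_add_right w
  have hone (w : 𝔼 n) : ∫ z, heatKernel n t (z + w) = 1 := by
    rw [integral_add_right_eq_self (heatKernel n t), integral_heatKernel n ht]
  have h0 : Integrable (heatKernel n t) := integrable_heatKernel n ht
  have hsum : Integrable fun z => heatKernel n t (z + v) + heatKernel n t z := (hint v).add h0
  have hmid : Integrable fun z => 2 * (heatKernel n t (z + (1 / 2 : ℝ) • v) * c) :=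
    ((hint _).mul_const c).const_mul 2
  have hgap : Integrable fun z => heatKernel n t (z + v) + heatKernel n t z
      - 2 * (heatKernel n t (z + (1 / 2 : ℝ) • v) * c) := hsum.sub hmid
  calc ∫ z, |heatKernel n t (z + v) - heatKernel n t z|
      ≤ ∫ z, (r / 2 * (heatKernel n t (z + v) + heatKernel n t z
            - 2 * (heatKernel n t (z + (1 / 2 : ℝ) • v) * c))
          + 1 / r * (heatKernel n t (z + v) + heatKernel n t z)) :=
        integral_mono ((hint v).sub h0).abs
          ((hgap.const_mul _).add (hsum.const_mul _)) fun z =>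
          abs_sub_le_of_mul_eq_sq (heatKernel_nonneg n ht _) (heatKernel_nonneg n ht _)
            (mul_nonneg (heatKernel_nonneg n ht _) (Real.exp_pos _).le) hr
            (heatKernel_add_mul_heatKernel n ht z v)
    _ = r * (1 - c) + 2 / r := by
        rw [integral_add (hgap.const_mul _) (hsum.const_mul _), integral_const_mul,
          integral_const_mul, integral_sub hsum hmid, integral_add (hint v) h0,
          integral_const_mul, integral_mul_const, hone, hone, integral_heatKernel n ht]
        ring

theorem integrable_abs_heatKernel_sub (n : ℕ) {t : ℝ} (ht : 0 < t) (v : 𝔼 n) :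
    Integrable fun z => |heatKernel n t (z + v) - heatKernel n t z| :=
  (((integrable_heatKernel n ht).comp_add_right v).sub (integrable_heatKernel n ht)).abs

theorem integral_abs_heatKernel_sub_le (n : ℕ) {t : ℝ} (ht : 0 < t) (v : 𝔼 n) :
    ∫ z, |heatKernel n t (z + v) - heatKernel n t z| ≤ 3 * ‖v‖ / √t := by
  rcases eq_or_ne v 0 with rfl | hv
  · simp
  have : 0 < ‖v‖ := norm_pos_iff.2 hv
  have hexp : 1 - Real.exp (-‖v‖ ^ 2 / (16 * t)) ≤ ‖v‖ ^ 2 / (16 * t) := by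
    linarith [Real.add_one_le_exp (-‖v‖ ^ 2 / (16 * t)), neg_div (16 * t) (‖v‖ ^ 2)]
  calc ∫ z, |heatKernel n t (z + v) - heatKernel n t z|
      ≤ √t / ‖v‖ * (1 - Real.exp (-‖v‖ ^ 2 / (16 * t))) + 2 / (√t / ‖v‖) :=
        integral_abs_heatKernel_sub_le_of_pos n ht v (by positivity)
    _ ≤ √t / ‖v‖ * (‖v‖ ^ 2 / (16 * t)) + 2 / (√t / ‖v‖) := by gcongr
    _ = (1 / 16 + 2) * (‖v‖ / √t) := by
        have hsq : √t ^ 2 = t := Real.sq_sqrt ht.le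
        field_simp
        rw [hsq]
        ring
    _ ≤ 3 * (‖v‖ / √t) := by gcongr; norm_num
    _ = 3 * ‖v‖ / √t := by ring

/-- The heat semigroup measure `h_t(x) dx`, that is, the centred Gaussian measure with covariance
`2t` times the identity. -/
def heatMeasure (n : ℕ) (t : ℝ) : Measure (𝔼 n) :=
  volume.withDensity fun z => ENNReal.ofReal (heatKernel n t z)

instance (n : ℕ) (t : ℝ) : SFinite (heatMeasure n t) := by
  unfold heatMeasure
  infer_instance

theorem isProbabilityMeasure_heatMeasure (n : ℕ) {t : ℝ} (ht : 0 < t) :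
    IsProbabilityMeasure (heatMeasure n t) where
  measure_univ := by
    rw [heatMeasure, withDensity_apply _ MeasurableSet.univ, Measure.restrict_univ,
      ← ofReal_integral_eq_lintegral_ofReal (integrable_heatKernel n ht)
        (.of_forall (heatKernel_nonneg n ht)), integral_heatKernel n ht, ENNReal.ofReal_one]

theorem lintegral_heatMeasure (n : ℕ) (t : ℝ) {φ : 𝔼 n → ℝ≥0∞} (hφ : Measurable φ) :
    ∫⁻ z, φ z ∂heatMeasure n t = ∫⁻ z, ENNReal.ofReal (heatKernel n t z) * φ z :=
  lintegral_withDensity_eq_lintegral_mul _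
    (continuous_heatKernel n t).measurable.ennreal_ofReal hφ

theorem integral_heatMeasure (n : ℕ) {t : ℝ} (ht : 0 < t) {F : Type*} [NormedAddCommGroup F]
    [NormedSpace ℝ F] (φ : 𝔼 n → F) :
    ∫ z, φ z ∂heatMeasure n t = ∫ z, heatKernel n t z • φ z := by
  rw [heatMeasure, integral_withDensity_eq_integral_toReal_smul
    (continuous_heatKernel n t).measurable.ennreal_ofReal (by simp)]
  simp only [ENNReal.toReal_ofReal (heatKernel_nonneg n ht _)]

theorem charFun_heatMeasure (n : ℕ) {t : ℝ} (ht : 0 < t) (ξ : 𝔼 n) :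
    charFun (heatMeasure n t) ξ = Complex.exp (-(t * ‖ξ‖ ^ 2 : ℝ)) := by
  have ht' : (t : ℂ) ≠ 0 := by exact_mod_cast ht.ne'
  have hker (z : 𝔼 n) : heatKernel n t z • Complex.exp ((inner ℝ z ξ : ℝ) * Complex.I) =
      ((4 * Real.pi * t) ^ (-(n : ℝ) / 2) : ℝ) *
        Complex.exp (-((1 / (4 * t) : ℝ) : ℂ) * ‖z‖ ^ 2 + Complex.I * (inner ℝ ξ z : ℝ)) := by
    rw [heatKernel, Complex.real_smul, Complex.exp_add, real_inner_comm]
    push_cast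
    rw [mul_assoc]
    congr 3 <;> ring
  have hbase : (Real.pi : ℂ) / ((1 / (4 * t) : ℝ) : ℂ) = ((4 * Real.pi * t : ℝ) : ℂ) := by
    push_cast
    field_simp
  have hpow : ((4 * Real.pi * t : ℝ) : ℂ) ^ ((n : ℂ) / 2) =
      ((4 * Real.pi * t) ^ ((n : ℝ) / 2) : ℝ) := by
    rw [Complex.ofReal_cpow (by positivity)]
    push_cast
    rfl
  rw [charFun_apply, integral_heatMeasure n ht]
  simp_rw [hker]
  rw [integral_const_mul, GaussianFourier.integral_cexp_neg_mul_sq_norm_add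
      (by rw [Complex.ofReal_re]; positivity) Complex.I ξ, hbase, finrank_euclideanSpace,
    Fintype.card_fin, hpow, ← mul_assoc, ← Complex.ofReal_mul, ← Real.rpow_add (by positivity),
    neg_div, neg_add_cancel, Real.rpow_zero, Complex.ofReal_one, one_mul, Complex.I_sq]
  congr 1
  push_cast
  field_simp

theorem heatMeasure_conv_heatMeasure (n : ℕ) {s t : ℝ} (hs : 0 < s) (ht : 0 < t) :
    (heatMeasure n s).conv (heatMeasure n t) = heatMeasure n (s + t) := by
  have := isProbabilityMeasure_heatMeasure n hs
  have := isProbabilityMeasure_heatMeasure n ht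
  have := isProbabilityMeasure_heatMeasure n (add_pos hs ht)
  refine Measure.ext_of_charFun (funext fun ξ => ?_)
  rw [charFun_conv, charFun_heatMeasure n hs, charFun_heatMeasure n ht,
    charFun_heatMeasure n (add_pos hs ht), ← Complex.exp_add]
  congr 1
  push_cast
  ring

theorem heatMeasure_map_smul (n : ℕ) {c t : ℝ} (hc : c ≠ 0) (ht : 0 < t) :
    (heatMeasure n t).map (c • ·) = heatMeasure n (c ^ 2 * t) := by
  have hct : 0 < c ^ 2 * t := by positivity
  have := isProbabilityMeasure_heatMeasure n ht
  have := isProbabilityMeasure_heatMeasure n hct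
  have : IsProbabilityMeasure ((heatMeasure n t).map (c • ·)) :=
    Measure.isProbabilityMeasure_map (by fun_prop)
  refine Measure.ext_of_charFun (funext fun ξ => ?_)
  rw [charFun_map_smul, charFun_heatMeasure n ht, charFun_heatMeasure n hct, norm_smul, mul_pow,
    Real.norm_eq_abs, sq_abs]
  congr 3
  ring

theorem heatMeasure_one_map_sqrt_smul (n : ℕ) {t : ℝ} (ht : 0 < t) :
    (heatMeasure n 1).map (√t • ·) = heatMeasure n t := by
  rw [heatMeasure_map_smul n (Real.sqrt_ne_zero'.2 ht) one_pos, Real.sq_sqrt ht.le, mul_one]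

theorem heatMeasure_map_neg (n : ℕ) {t : ℝ} (ht : 0 < t) :
    (heatMeasure n t).map (fun x => -x) = heatMeasure n t := by
  simpa using heatMeasure_map_smul n (c := -1) (by norm_num) ht

end HeatKernel

/-! ### The heat semigroup on bounded functions -/

section Heat

variable {n : ℕ} {Y : Type*} [NormedAddCommGroup Y] {φ ψ : 𝔼 n → Y} {C D : ℝ}

theorem integrable_comp_sub_left_heatMeasure (hφ : StronglyMeasurable φ) (hC : ∀ x, ‖φ x‖ ≤ C)
    {t : ℝ} (ht : 0 < t) (x : 𝔼 n) : Integrable (fun z => φ (x - z)) (heatMeasure n t) := by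
  have := isProbabilityMeasure_heatMeasure n ht
  exact .of_bound (hφ.comp_measurable (by fun_prop)).aestronglyMeasurable C
    (.of_forall fun z => hC _)

variable [NormedSpace ℝ Y]

theorem heat_eq_integral_heatMeasure {t : ℝ} (ht : 0 < t) (φ : 𝔼 n → Y) (x : 𝔼 n) :
    heat t φ x = ∫ z, φ (x - z) ∂heatMeasure n t := by
  rw [integral_heatMeasure n ht, heat]

theorem heat_eq_integral_add {t : ℝ} (ht : 0 < t) (φ : 𝔼 n → Y) (x : 𝔼 n) :
    heat t φ x = ∫ z, φ (x + z) ∂heatMeasure n t := by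
  have hneg : MeasurePreserving (fun z : 𝔼 n => -z) (heatMeasure n t) (heatMeasure n t) :=
    ⟨measurable_neg, heatMeasure_map_neg n ht⟩
  simpa [sub_eq_add_neg, heat_eq_integral_heatMeasure ht] using
    hneg.integral_comp (MeasurableEquiv.neg (𝔼 n)).measurableEmbedding fun z => φ (x + z)

theorem enorm_heat_le (φ : 𝔼 n → Y) {t : ℝ} (ht : 0 < t) (x : 𝔼 n) :
    ‖heat t φ x‖ₑ ≤ ∫⁻ z, ‖φ (x - z)‖ₑ ∂heatMeasure n t := by
  rw [heat_eq_integral_heatMeasure ht]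
  exact enorm_integral_le_lintegral_enorm _

theorem norm_heat_le (hC : ∀ x, ‖φ x‖ ≤ C) {t : ℝ} (ht : 0 < t) (x : 𝔼 n) :
    ‖heat t φ x‖ ≤ C := by
  have := isProbabilityMeasure_heatMeasure n ht
  rw [heat_eq_integral_heatMeasure ht]
  simpa using norm_integral_le_of_norm_le_const (μ := heatMeasure n t)
    (.of_forall fun z => hC (x - z))

theorem stronglyMeasurable_heat_uncurry {P : Type*} [MeasurableSpace P] {a : P → ℝ} {b : P → 𝔼 n}
    {Φ : P → 𝔼 n → Y} (ha : Measurable a) (hb : Measurable b)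
    (hΦ : StronglyMeasurable (Function.uncurry Φ)) :
    StronglyMeasurable fun p => heat (a p) (Φ p) (b p) :=
  StronglyMeasurable.integral_prod_right (f := fun p z => heatKernel n (a p) z • Φ p (b p - z)) <|
    .smul ((measurable_heatKernel n).comp
        ((ha.comp measurable_fst).prodMk measurable_snd)).stronglyMeasurable
      (hΦ.comp_measurable (measurable_fst.prodMk ((hb.comp measurable_fst).sub measurable_snd)))

theorem stronglyMeasurable_heat {P : Type*} [MeasurableSpace P] {a : P → ℝ} {b : P → 𝔼 n}
    (ha : Measurable a) (hb : Measurable b) (hφ : StronglyMeasurable φ) :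
    StronglyMeasurable fun p => heat (a p) φ (b p) :=
  stronglyMeasurable_heat_uncurry (Φ := fun _ => φ) ha hb (hφ.comp_measurable measurable_snd)

theorem heat_heat (hφ : StronglyMeasurable φ) (hC : ∀ x, ‖φ x‖ ≤ C) {s t : ℝ} (hs : 0 < s)
    (ht : 0 < t) (x : 𝔼 n) : heat s (heat t φ) x = heat (s + t) φ x := by
  have hint := integrable_comp_sub_left_heatMeasure hφ hC (add_pos hs ht) x
  rw [heat_eq_integral_heatMeasure (add_pos hs ht)]
  rw [← heatMeasure_conv_heatMeasure n hs ht] at hint ⊢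
  simp only [integral_conv hint, heat_eq_integral_heatMeasure hs, heat_eq_integral_heatMeasure ht,
    sub_sub]

theorem heat_sub (hφ : StronglyMeasurable φ) (hC : ∀ x, ‖φ x‖ ≤ C) (hψ : StronglyMeasurable ψ)
    (hD : ∀ x, ‖ψ x‖ ≤ D) {t : ℝ} (ht : 0 < t) (x : 𝔼 n) :
    heat t (fun y => φ y - ψ y) x = heat t φ x - heat t ψ x := by
  simp only [heat_eq_integral_heatMeasure ht]
  exact integral_sub (integrable_comp_sub_left_heatMeasure hφ hC ht x)
    (integrable_comp_sub_left_heatMeasure hψ hD ht x)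

theorem heat_eq_integral_sqrt_smul (hφ : StronglyMeasurable φ) {t : ℝ} (ht : 0 < t) (x : 𝔼 n) :
    heat t φ x = ∫ z, φ (x - √t • z) ∂heatMeasure n 1 := by
  rw [heat_eq_integral_heatMeasure ht, ← heatMeasure_one_map_sqrt_smul n ht]
  exact integral_map (by fun_prop) (hφ.comp_measurable (by fun_prop)).aestronglyMeasurable

/-- The measure `|h_t(z + v) - h_t(z)| dz`, whose mass is the `L_1` modulus of continuity of the
heat kernel. -/
def heatShiftMeasure (n : ℕ) (t : ℝ) (v : 𝔼 n) : Measure (𝔼 n) :=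
  volume.withDensity fun z => ENNReal.ofReal |heatKernel n t (z + v) - heatKernel n t z|

instance (t : ℝ) (v : 𝔼 n) : SFinite (heatShiftMeasure n t v) := by
  unfold heatShiftMeasure
  infer_instance

theorem heatShiftMeasure_univ_le {t : ℝ} (ht : 0 < t) (v : 𝔼 n) :
    heatShiftMeasure n t v univ ≤ ENNReal.ofReal (3 * ‖v‖ / √t) := by
  rw [heatShiftMeasure, withDensity_apply _ MeasurableSet.univ, Measure.restrict_univ,
    ← ofReal_integral_eq_lintegral_ofReal (integrable_abs_heatKernel_sub n ht v)
      (.of_forall fun _ => abs_nonneg _)]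
  exact ENNReal.ofReal_le_ofReal (integral_abs_heatKernel_sub_le n ht v)

theorem heat_add_sub_heat (hφ : StronglyMeasurable φ) (hC : ∀ x, ‖φ x‖ ≤ C) {t : ℝ} (ht : 0 < t)
    (x v : 𝔼 n) : heat t φ (x + v) - heat t φ x =
      ∫ z, (heatKernel n t (z + v) - heatKernel n t z) • φ (x - z) := by
  have hmeas : AEStronglyMeasurable (fun z => φ (x - z)) volume :=
    (hφ.comp_measurable (by fun_prop)).aestronglyMeasurable
  have hshift : heat t φ (x + v) = ∫ z, heatKernel n t (z + v) • φ (x - z) := by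
    rw [heat, ← integral_add_right_eq_self _ v]
    simp only [add_sub_add_right_eq_sub]
  have hint : Integrable fun z => heatKernel n t z • φ (x - z) :=
    (integrable_heatKernel n ht).smul_bdd C hmeas (.of_forall fun z => hC _)
  have hint' : Integrable fun z => heatKernel n t (z + v) • φ (x - z) :=
    ((integrable_heatKernel n ht).comp_add_right v).smul_bdd C hmeas (.of_forall fun z => hC _)
  rw [hshift, heat, ← integral_sub hint' hint]
  simp only [sub_smul]

theorem enorm_heat_add_sub_heat_le (hφ : StronglyMeasurable φ) (hC : ∀ x, ‖φ x‖ ≤ C) {t : ℝ}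
    (ht : 0 < t) (x v : 𝔼 n) :
    ‖heat t φ (x + v) - heat t φ x‖ₑ ≤ ∫⁻ z, ‖φ (x - z)‖ₑ ∂heatShiftMeasure n t v := by
  have hk : Continuous (heatKernel n t) := continuous_heatKernel n t
  have hdens : Measurable fun z => ENNReal.ofReal |heatKernel n t (z + v) - heatKernel n t z| := by
    fun_prop
  have hφx : Measurable fun z => ‖φ (x - z)‖ₑ :=
    (hφ.comp_measurable (g := fun z => x - z) (by fun_prop)).enorm
  rw [heat_add_sub_heat hφ hC ht, heatShiftMeasure,
    lintegral_withDensity_eq_lintegral_mul _ hdens hφx]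
  refine (enorm_integral_le_lintegral_enorm _).trans_eq (lintegral_congr fun z => ?_)
  rw [enorm_smul, Pi.mul_apply, Real.enorm_eq_ofReal_abs]

theorem norm_heat_add_sub_heat_le (hφ : StronglyMeasurable φ) (hC : ∀ x, ‖φ x‖ ≤ C) {t : ℝ}
    (ht : 0 < t) (x v : 𝔼 n) :
    ‖heat t φ (x + v) - heat t φ x‖ ≤ C * (3 * ‖v‖ / √t) := by
  have hC0 : 0 ≤ C := (norm_nonneg _).trans (hC 0)
  rw [← ENNReal.ofReal_le_ofReal_iff (by positivity), ofReal_norm, ENNReal.ofReal_mul hC0]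
  calc ‖heat t φ (x + v) - heat t φ x‖ₑ ≤ ∫⁻ z, ‖φ (x - z)‖ₑ ∂heatShiftMeasure n t v :=
        enorm_heat_add_sub_heat_le hφ hC ht x v
    _ ≤ ∫⁻ _, ENNReal.ofReal C ∂heatShiftMeasure n t v := by
        gcongr with z
        rw [← ofReal_norm]
        exact ENNReal.ofReal_le_ofReal (hC _)
    _ ≤ ENNReal.ofReal C * ENNReal.ofReal (3 * ‖v‖ / √t) := by
        rw [lintegral_const]
        gcongr
        exact heatShiftMeasure_univ_le ht v

theorem continuous_heat (hφ : StronglyMeasurable φ) (hC : ∀ x, ‖φ x‖ ≤ C) {t : ℝ} (ht : 0 < t) :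
    Continuous (heat t φ) := by
  refine (LipschitzWith.of_dist_le' (K := C * (3 / √t)) fun x y => ?_).continuous
  have h := norm_heat_add_sub_heat_le hφ hC ht y (x - y)
  rw [add_sub_cancel] at h
  rw [dist_eq_norm, dist_eq_norm]
  exact h.trans_eq (by ring)

theorem eLpNorm'_heat_add_sub_heat_le {q : ℝ} (hq : 1 ≤ q) (hφ : StronglyMeasurable φ)
    (hC : ∀ x, ‖φ x‖ ≤ C) {t : ℝ} (ht : 0 < t) (v : 𝔼 n) :
    eLpNorm' (fun x => heat t φ (x + v) - heat t φ x) q volume ≤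
      ENNReal.ofReal (3 * ‖v‖ / √t) * eLpNorm' φ q volume := by
  calc eLpNorm' (fun x => heat t φ (x + v) - heat t φ x) q volume
      ≤ eLpNorm' (fun x => ∫⁻ z, ‖φ (x - z)‖ₑ ∂heatShiftMeasure n t v) q volume :=
        eLpNorm'_le_of_enorm_le _ (by linarith) fun x => enorm_heat_add_sub_heat_le hφ hC ht x v
    _ ≤ heatShiftMeasure n t v univ * eLpNorm' φ q volume :=
        (eLpNorm'_lintegral_comp_sub_le volume _ hq hφ.enorm).trans_eq (by rw [eLpNorm'_enorm])
    _ ≤ ENNReal.ofReal (3 * ‖v‖ / √t) * eLpNorm' φ q volume := by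
        gcongr
        exact heatShiftMeasure_univ_le ht v

end Heat

/-! ### Norms on Euclidean space -/

namespace IsNorm

section Algebraic

variable {V : Type*} [AddCommGroup V] [Module ℝ V] {N : V → ℝ}

/-- The bundled seminorm underlying a norm `N`; it makes Mathlib's seminorm API available. -/
def seminorm (hN : IsNorm N) : Seminorm ℝ V :=
  .of N hN.2.2 (by simpa using hN.2.1)

theorem map_smul_of_nonneg (hN : IsNorm N) {a : ℝ} (ha : 0 ≤ a) (x : V) : N (a • x) = a * N x := by
  rw [hN.2.1, abs_of_nonneg ha]

theorem map_zero (hN : IsNorm N) : N 0 = 0 :=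
  _root_.map_zero hN.seminorm

theorem nonneg (hN : IsNorm N) (x : V) : 0 ≤ N x :=
  apply_nonneg hN.seminorm x

theorem pos (hN : IsNorm N) {x : V} (hx : x ≠ 0) : 0 < N x :=
  (hN.nonneg x).lt_of_ne' fun h => hx (hN.1 x h)

end Algebraic

section Topological

variable {E : Type*} [NormedAddCommGroup E] [NormedSpace ℝ E] [FiniteDimensional ℝ E] {N : E → ℝ}

theorem continuous (hN : IsNorm N) : Continuous N :=
  hN.seminorm.convexOn.locallyLipschitz.continuous

theorem exists_le_mul_norm (hN : IsNorm N) : ∃ C, 0 < C ∧ ∀ x, N x ≤ C * ‖x‖ :=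
  hN.seminorm.bound_of_continuous_normedSpace hN.continuous

theorem exists_mul_norm_le (hN : IsNorm N) : ∃ c, 0 < c ∧ ∀ x, c * ‖x‖ ≤ N x := by
  rcases subsingleton_or_nontrivial E with _ | _
  · exact ⟨1, one_pos, fun x => by simp [Subsingleton.elim x 0, hN.map_zero]⟩
  obtain ⟨x₀, hx₀, hmin⟩ := (isCompact_sphere (0 : E) 1).exists_isMinOn
    (NormedSpace.sphere_nonempty.2 zero_le_one) hN.continuous.continuousOn
  refine ⟨N x₀, hN.pos (ne_of_mem_sphere hx₀ one_ne_zero), fun x => ?_⟩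
  rcases eq_or_ne x 0 with rfl | hx
  · simp [hN.map_zero]
  have hxn : 0 < ‖x‖ := norm_pos_iff.2 hx
  calc N x₀ * ‖x‖ ≤ N (‖x‖⁻¹ • x) * ‖x‖ := by
        gcongr
        exact hmin (by simp [norm_smul, hxn.ne'])
    _ = N x := by rw [hN.map_smul_of_nonneg (by positivity)]; field_simp

theorem isCompact_le_one (hN : IsNorm N) : IsCompact {x | N x ≤ 1} := by
  obtain ⟨c, hc, h⟩ := hN.exists_mul_norm_le
  refine (isCompact_closedBall (0 : E) c⁻¹).of_isClosed_subset
    (isClosed_le hN.continuous continuous_const) fun x hx => ?_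
  rw [mem_closedBall_zero_iff, ← one_div, le_div_iff₀' hc]
  exact (h x).trans hx

theorem measure_le_one_pos (hN : IsNorm N) [MeasurableSpace E] (μ : Measure E)
    [μ.IsOpenPosMeasure] : 0 < μ {x | N x ≤ 1} := by
  have hopen : IsOpen {x | N x < 1} := isOpen_lt hN.continuous continuous_const
  exact (hopen.measure_pos μ ⟨0, by simp [hN.map_zero]⟩).trans_le
    (measure_mono fun x (hx : N x < 1) => hx.le)

end Topological

end IsNorm

/-! ### Compactly supported Lipschitz functions and their heat evolutes -/

section Deriv

variable {n : ℕ} {Y : Type*} [NormedAddCommGroup Y]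

/-- `f` is compactly supported and `L`-Lipschitz with respect to the norm `N`. -/
structure CompactLip (N : 𝔼 n → ℝ) (L : ℝ) (f : 𝔼 n → Y) : Prop where
  isNorm : IsNorm N
  nonneg : 0 ≤ L
  hasCompactSupport : HasCompactSupport f
  norm_sub_le : ∀ x y, ‖f x - f y‖ ≤ L * N (x - y)

namespace CompactLip

variable {N : 𝔼 n → ℝ} {L : ℝ} {f : 𝔼 n → Y}

theorem continuous (hf : CompactLip N L f) : Continuous f := by
  obtain ⟨C, -, h⟩ := hf.isNorm.exists_le_mul_norm
  refine (LipschitzWith.of_dist_le' (K := L * C) fun x y => ?_).continuous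
  rw [dist_eq_norm, dist_eq_norm, mul_assoc]
  exact (hf.norm_sub_le x y).trans (mul_le_mul_of_nonneg_left (h _) hf.nonneg)

theorem stronglyMeasurable (hf : CompactLip N L f) : StronglyMeasurable f :=
  hf.continuous.stronglyMeasurable

theorem exists_norm_le (hf : CompactLip N L f) : ∃ C, ∀ x, ‖f x‖ ≤ C :=
  hf.hasCompactSupport.exists_bound_of_continuous hf.continuous

end CompactLip

variable [NormedSpace ℝ Y]

theorem differentiable_integral_smul_comp_sub {g : 𝔼 n → ℝ} (hg : ContDiff ℝ 1 g) {f : 𝔼 n → Y}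
    (hf : Continuous f) (hfc : HasCompactSupport f) :
    Differentiable ℝ fun x => ∫ z, g z • f (x - z) := by
  intro x₀
  obtain ⟨R, hR0, hR⟩ := hfc.isCompact.isBounded.subset_closedBall_lt 0 0
  let χ : ContDiffBump x₀ := ⟨R + 1, R + 2, by positivity, by linarith⟩
  -- Near `x₀` the integral only sees `g` on a bounded set, so `g` may be cut off.
  have hcut : (fun x => ∫ z, g z • f (x - z)) =ᶠ[nhds x₀]
      convolution (fun z => χ z * g z) f (.lsmul ℝ ℝ) volume := by
    filter_upwards [ball_mem_nhds x₀ one_pos] with x hx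
    refine integral_congr_ae (.of_forall fun z => ?_)
    by_cases hz : f (x - z) = 0
    · simp [hz]
    have hxz : ‖x - z‖ ≤ R := by simpa using hR (subset_tsupport f hz)
    have hχ : χ z = 1 := χ.one_of_mem_closedBall <| by
      rw [mem_closedBall, dist_comm, dist_eq_norm]
      rw [mem_ball', dist_eq_norm] at hx
      calc ‖x₀ - z‖ = ‖(x - z) + (x₀ - x)‖ := by rw [add_comm, sub_add_sub_cancel]
        _ ≤ R + 1 := (norm_add_le _ _).trans (add_le_add hxz hx.le)
    simp [hχ]
  refine DifferentiableAt.congr_of_eventuallyEq ?_ hcut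
  exact (HasCompactSupport.contDiff_convolution_left (n := 1) (.lsmul ℝ ℝ)
    χ.hasCompactSupport.mul_right (χ.contDiff.mul hg) hf.locallyIntegrable).differentiable
    one_ne_zero x₀

theorem contDiff_heatKernel (n : ℕ) (t : ℝ) : ContDiff ℝ 1 (heatKernel n t) :=
  contDiff_const.mul ((contDiff_norm_sq ℝ).neg.div_const _).exp

theorem differentiable_heat {f : 𝔼 n → Y} (hf : Continuous f) (hfc : HasCompactSupport f) (t : ℝ) :
    Differentiable ℝ (heat t f) :=
  differentiable_integral_smul_comp_sub (contDiff_heatKernel n t) hf hfc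

/-- The difference quotients of `f` in the direction `w`, with step `1 / (k + 1)`. -/
def diffQuot (f : 𝔼 n → Y) (w : 𝔼 n) (k : ℕ) (x : 𝔼 n) : Y :=
  ((k : ℝ) + 1) • (f (x + ((k : ℝ) + 1)⁻¹ • w) - f x)

theorem tendsto_diffQuot {g : 𝔼 n → Y} {x : 𝔼 n} (hg : DifferentiableAt ℝ g x) (w : 𝔼 n) :
    Filter.Tendsto (fun k => diffQuot g w k x) .atTop (nhds (fderiv ℝ g x w)) := by
  have hstep : Filter.Tendsto (fun k : ℕ => ((k : ℝ) + 1)⁻¹) .atTop (nhdsWithin 0 {0}ᶜ) := by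
    refine tendsto_nhdsWithin_iff.2 ⟨?_, .of_forall fun k => ?_⟩
    · simpa using tendsto_one_div_add_atTop_nhds_zero_nat (𝕜 := ℝ)
    · simpa using (Nat.cast_add_one_pos (α := ℝ) k).ne'
  have hslope := hasDerivAt_iff_tendsto_slope_zero.1 (hg.hasFDerivAt.hasLineDerivAt w)
  refine (hslope.comp hstep).congr fun k => ?_
  simp [diffQuot]

theorem continuous_diffQuot_uncurry {f : 𝔼 n → Y} (hf : Continuous f) (k : ℕ) :
    Continuous fun p : 𝔼 n × 𝔼 n => diffQuot f p.1 k p.2 := by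
  unfold diffQuot
  fun_prop

theorem heat_diffQuot {f : 𝔼 n → Y} {C : ℝ} (hf : StronglyMeasurable f) (hC : ∀ x, ‖f x‖ ≤ C)
    (w : 𝔼 n) (k : ℕ) {t : ℝ} (ht : 0 < t) (x : 𝔼 n) :
    heat t (diffQuot f w k) x = diffQuot (heat t f) w k x := by
  have hshift : heat t f (x + ((k : ℝ) + 1)⁻¹ • w) =
      heat t (fun y => f (y + ((k : ℝ) + 1)⁻¹ • w)) x := by
    simp only [heat, add_sub_right_comm]
  rw [diffQuot, hshift, ← heat_sub (φ := fun y => f (y + ((k : ℝ) + 1)⁻¹ • w)) (ψ := f)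
    (hf.comp_measurable (by fun_prop)) (fun _ => hC _) hf hC ht x]
  simp only [diffQuot, heat_eq_integral_heatMeasure ht, integral_smul]

/-- The directional derivative `∂_w H_t f`. -/
def heatDeriv (f : 𝔼 n → Y) (w : 𝔼 n) (t : ℝ) (x : 𝔼 n) : Y :=
  fderiv ℝ (heat t f) x w

namespace CompactLip

variable {N : 𝔼 n → ℝ} {L : ℝ} {f : 𝔼 n → Y}

theorem norm_diffQuot_le (hf : CompactLip N L f) (w : 𝔼 n) (k : ℕ) (x : 𝔼 n) :
    ‖diffQuot f w k x‖ ≤ L * N w := by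
  have hk : (0 : ℝ) < (k : ℝ) + 1 := by positivity
  have hlip := hf.norm_sub_le (x + ((k : ℝ) + 1)⁻¹ • w) x
  rw [add_sub_cancel_left, hf.isNorm.map_smul_of_nonneg (by positivity)] at hlip
  rw [diffQuot, norm_smul, Real.norm_of_nonneg hk.le]
  calc ((k : ℝ) + 1) * ‖f (x + ((k : ℝ) + 1)⁻¹ • w) - f x‖
      ≤ ((k : ℝ) + 1) * (L * (((k : ℝ) + 1)⁻¹ * N w)) := by gcongr
    _ = L * N w := by field_simp

theorem stronglyMeasurable_diffQuot (hf : CompactLip N L f) (w : 𝔼 n) (k : ℕ) :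
    StronglyMeasurable (diffQuot f w k) :=
  ((continuous_diffQuot_uncurry hf.continuous k).comp
    (Continuous.prodMk_right w)).stronglyMeasurable

theorem tendsto_heat_diffQuot (hf : CompactLip N L f) (w x : 𝔼 n) {t : ℝ} (ht : 0 < t) :
    Filter.Tendsto (fun k => heat t (diffQuot f w k) x) .atTop (nhds (heatDeriv f w t x)) := by
  obtain ⟨C, hC⟩ := hf.exists_norm_le
  simp only [heat_diffQuot hf.stronglyMeasurable hC w _ ht]
  exact tendsto_diffQuot (differentiable_heat hf.continuous hf.hasCompactSupport t x) w

theorem norm_heatDeriv_le (hf : CompactLip N L f) (w : 𝔼 n) {t : ℝ} (ht : 0 < t) (x : 𝔼 n) :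
    ‖heatDeriv f w t x‖ ≤ L * N w :=
  le_of_tendsto (hf.tendsto_heat_diffQuot w x ht).norm
    (.of_forall fun k => norm_heat_le (hf.norm_diffQuot_le w k) ht x)

theorem stronglyMeasurable_heatDeriv (hf : CompactLip N L f) {P : Type*} [MeasurableSpace P]
    {a : P → ℝ} {b c : P → 𝔼 n} (ha : Measurable a) (ha0 : ∀ p, 0 < a p) (hb : Measurable b)
    (hc : Measurable c) : StronglyMeasurable fun p => heatDeriv f (c p) (a p) (b p) := by
  refine stronglyMeasurable_of_tendsto .atTop
    (f := fun k p => heat (a p) (diffQuot f (c p) k) (b p)) (fun k => ?_)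
    (tendsto_pi_nhds.2 fun p => hf.tendsto_heat_diffQuot _ _ (ha0 p))
  exact stronglyMeasurable_heat_uncurry (Φ := fun p => diffQuot f (c p) k) ha hb <|
    (continuous_diffQuot_uncurry hf.continuous k).stronglyMeasurable.comp_measurable
      ((hc.comp measurable_fst).prodMk measurable_snd)

theorem stronglyMeasurable_heatDeriv_right (hf : CompactLip N L f) (w : 𝔼 n) {t : ℝ}
    (ht : 0 < t) : StronglyMeasurable (heatDeriv f w t) :=
  hf.stronglyMeasurable_heatDeriv (a := fun _ => t) (b := fun x => x) (c := fun _ => w)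
    measurable_const (fun _ => ht) measurable_id measurable_const

theorem heat_heatDeriv (hf : CompactLip N L f) (w : 𝔼 n) {s t : ℝ} (hs : 0 < s) (ht : 0 < t)
    (x : 𝔼 n) : heat s (heatDeriv f w t) x = heatDeriv f w (s + t) x := by
  have := isProbabilityMeasure_heatMeasure n hs
  refine tendsto_nhds_unique ?_ (hf.tendsto_heat_diffQuot w x (add_pos hs ht))
  simp only [← heat_heat (hf.stronglyMeasurable_diffQuot w _) (hf.norm_diffQuot_le w _) hs ht,
    heat_eq_integral_heatMeasure hs]
  refine tendsto_integral_of_dominated_convergence (fun _ => L * N w) (fun k => ?_)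
    (integrable_const _)
    (fun k => .of_forall fun z => norm_heat_le (hf.norm_diffQuot_le w k) ht _)
    (.of_forall fun z => hf.tendsto_heat_diffQuot w _ ht)
  exact ((continuous_heat (hf.stronglyMeasurable_diffQuot w k) (hf.norm_diffQuot_le w k) ht).comp
    (continuous_sub_left x)).aestronglyMeasurable

theorem continuous_heatDeriv (hf : CompactLip N L f) (w : 𝔼 n) {t : ℝ} (ht : 0 < t) :
    Continuous (heatDeriv f w t) := by
  have ht2 : 0 < t / 2 := half_pos ht
  have hhalf : heatDeriv f w t = heat (t / 2) (heatDeriv f w (t / 2)) := by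
    ext x
    rw [hf.heat_heatDeriv w ht2 ht2, add_halves]
  rw [hhalf]
  exact continuous_heat (hf.stronglyMeasurable_heatDeriv_right w ht2) (hf.norm_heatDeriv_le w ht2)
    ht2

theorem heat_add_smul_sub_heat [CompleteSpace Y] (hf : CompactLip N L f) (w x : 𝔼 n) {t : ℝ}
    (ht : 0 < t) (r : ℝ) : heat t f (x + r • w) - heat t f x =
      ∫ s in (0 : ℝ)..r, heatDeriv f w t (x + s • w) := by
  have hderiv (s : ℝ) : HasDerivAt (fun s : ℝ => heat t f (x + s • w))
      (heatDeriv f w t (x + s • w)) s := by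
    have hline : HasDerivAt (fun s : ℝ => x + s • w) w s := by
      simpa using ((hasDerivAt_id s).smul_const w).const_add x
    exact (differentiable_heat hf.continuous hf.hasCompactSupport t _).hasFDerivAt.comp_hasDerivAt
      s hline
  have hcont : Continuous fun s : ℝ => heatDeriv f w t (x + s • w) :=
    (hf.continuous_heatDeriv w ht).comp (by fun_prop)
  rw [intervalIntegral.integral_eq_sub_of_hasDerivAt (fun s _ => hderiv s)
    (hcont.intervalIntegrable _ _)]
  simp

end CompactLip

end Deriv

/-! ### Martingales along random walks -/

section RandomWalk

open ProbabilityTheory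

theorem condExp_comp_prodMk_of_indepFun {Ω β γ F : Type*} [MeasurableSpace Ω]
    {mβ : MeasurableSpace β} [MeasurableSpace γ] [StandardBorelSpace γ] [Nonempty γ]
    [NormedAddCommGroup F] [NormedSpace ℝ F] [CompleteSpace F] {P : Measure Ω} [IsFiniteMeasure P]
    {X : Ω → β} {Z : Ω → γ}
    (hX : Measurable X) (hZ : Measurable Z) (hXZ : X ⟂ᵢ[P] Z) {f : β × γ → F}
    (hf : StronglyMeasurable f) (hint : Integrable (fun ω => f (X ω, Z ω)) P) :
    P[fun ω => f (X ω, Z ω) | mβ.comap X] =ᵐ[P] fun ω => ∫ z, f (X ω, z) ∂P.map Z := by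
  have hcond : condDistrib Z X P =ᵐ[P.map X] Kernel.const β (P.map Z) := by
    refine condDistrib_ae_eq_of_measure_eq_compProd X hZ.aemeasurable ?_
    rw [Measure.compProd_const]
    exact (indepFun_iff_map_prod_eq_prod_map_map hX.aemeasurable hZ.aemeasurable).1 hXZ
  refine (condExp_prod_ae_eq_integral_condDistrib hX hZ.aemeasurable hf hint).trans ?_
  filter_upwards [ae_of_ae_map hX.aemeasurable hcond] with ω hω
  rw [hω, Kernel.const_apply]

variable {E : Type*} [MeasurableSpace E] (ν : ℕ → Measure E) [∀ k, IsProbabilityMeasure (ν k)]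

theorem indepFun_frestrictLe_eval_succ (k : ℕ) :
    IndepFun (Preorder.frestrictLe k) (fun ω : ℕ → E => ω (k + 1)) (Measure.infinitePi ν) := by
  have hindep := (iIndepFun_infinitePi (P := ν) (X := fun _ x => x)
    fun _ => measurable_id).indepFun_finset (Finset.Iic k) {k + 1} (by simp)
    fun i => measurable_pi_apply i
  exact hindep.comp measurable_id (measurable_pi_apply ⟨k + 1, Finset.mem_singleton_self _⟩)

variable [AddCommMonoid E] [MeasurableAdd₂ E]

theorem map_sum_range_succ_infinitePi (k : ℕ) :
    (Measure.infinitePi ν).map (fun ω => ∑ i ∈ Finset.range (k + 1), ω i) =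
      ((Measure.infinitePi ν).map fun ω => ∑ i ∈ Finset.range k, ω i) ∗ ν k := by
  have hindep := (iIndepFun_infinitePi (P := ν) (X := fun _ x => x)
    fun _ => measurable_id).indepFun_sum_range_succ (fun i => measurable_pi_apply i) k
  have hsum : (∑ i ∈ Finset.range k, fun ω : ℕ → E => ω i) =
      fun ω => ∑ i ∈ Finset.range k, ω i := by
    ext ω
    exact Finset.sum_apply ω _ _
  rw [hsum] at hindep
  rw [← Measure.infinitePi_map_eval ν k,
    ← hindep.map_add_eq_map_conv_map (by fun_prop) (measurable_pi_apply k)]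
  simp only [Finset.sum_range_succ]
  rfl

variable {Y : Type*} [NormedAddCommGroup Y] [NormedSpace ℝ Y] [CompleteSpace Y]

theorem martingale_comp_sum_range [StandardBorelSpace E] {g : ℕ → E → Y} {C : ℝ}
    (hg : ∀ k, StronglyMeasurable (g k)) (hC : ∀ k x, ‖g k x‖ ≤ C)
    (hstep : ∀ k x, g k x = ∫ z, g (k + 1) (x + z) ∂ν (k + 1)) :
    Martingale (fun k ω => g k (∑ i ∈ Finset.range (k + 1), ω i)) Filtration.piLE
      (Measure.infinitePi ν) := by
  have hsum (k : ℕ) (ω : ℕ → E) :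
      ∑ i ∈ Finset.range (k + 1), ω i = ∑ i, Preorder.frestrictLe k ω i := by
    rw [Nat.range_succ_eq_Iic, ← Finset.sum_coe_sort]
    rfl
  have hint (k : ℕ) : Integrable (fun ω : ℕ → E => g k (∑ i ∈ Finset.range (k + 1), ω i))
      (Measure.infinitePi ν) :=
    .of_bound ((hg k).comp_measurable (by fun_prop)).aestronglyMeasurable C
      (.of_forall fun ω => hC _ _)
  refine martingale_nat (fun k => ?_) hint fun k => ?_
  · rw [Filtration.piLE_eq_comap_frestrictLe]
    simp only [hsum]
    exact ((hg k).comp_measurable (g := fun ξ : Finset.Iic k → E => ∑ i, ξ i)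
      (by fun_prop)).comp_measurable (comap_measurable _)
  · have hint' := hint (k + 1)
    have : Nonempty E := ⟨0⟩
    rw [Filtration.piLE_eq_comap_frestrictLe]
    simp only [Finset.sum_range_succ _ (k + 1), hsum] at hint' ⊢
    have hcond := condExp_comp_prodMk_of_indepFun (Preorder.measurable_frestrictLe k)
      (measurable_pi_apply (k + 1)) (indepFun_frestrictLe_eval_succ ν k)
      (f := fun p => g (k + 1) ((∑ i, p.1 i) + p.2)) ((hg _).comp_measurable (by fun_prop)) hint'
    simp only [Measure.infinitePi_map_eval, ← hstep] at hcond
    exact hcond.symm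

end RandomWalk

/-! ### The dyadic square function of the heat semigroup -/

section LittlewoodPaley

variable {n : ℕ}

/-- The law of a sequence of independent heat increments with times `r / 2 ^ k`. Its partial sums
`S` satisfy `S k + heatMeasure (2 r / 2 ^ k) = heatMeasure (2 r)` in law. -/
def heatWalk (n : ℕ) (r : ℝ) : Measure (ℕ → 𝔼 n) :=
  Measure.infinitePi fun k => heatMeasure n (r / 2 ^ k)

theorem isProbabilityMeasure_heatWalk {r : ℝ} (hr : 0 < r) :
    IsProbabilityMeasure (heatWalk n r) := by
  have (k : ℕ) : IsProbabilityMeasure (heatMeasure n (r / 2 ^ k)) :=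
    isProbabilityMeasure_heatMeasure n (by positivity)
  unfold heatWalk
  infer_instance

theorem heatWalk_map_sum_conv_heatMeasure {r : ℝ} (hr : 0 < r) (k : ℕ) :
    (heatWalk n r).map (fun ω => ∑ i ∈ Finset.range k, ω i) ∗ heatMeasure n (2 * r / 2 ^ k) =
      heatMeasure n (2 * r) := by
  have (k : ℕ) : IsProbabilityMeasure (heatMeasure n (r / 2 ^ k)) :=
    isProbabilityMeasure_heatMeasure n (by positivity)
  have := isProbabilityMeasure_heatWalk (n := n) hr
  induction k with
  | zero => simp
  | succ k ih =>
    have hk : 0 < r / 2 ^ k := by positivity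
    rw [show 2 * r / 2 ^ (k + 1) = r / 2 ^ k by ring, heatWalk, map_sum_range_succ_infinitePi,
      Measure.conv_assoc, heatMeasure_conv_heatMeasure n hk hk, ← ih, heatWalk]
    ring_nf

theorem lintegral_lintegral_comp_sub (ρ : Measure (𝔼 n)) [IsProbabilityMeasure ρ] {φ : 𝔼 n → ℝ≥0∞}
    (hφ : Measurable φ) : ∫⁻ x, ∫⁻ z, φ (x - z) ∂ρ = ∫⁻ x, φ x := by
  have hφ' : Measurable fun p : 𝔼 n × 𝔼 n => φ (p.1 - p.2) := hφ.comp (by fun_prop)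
  rw [lintegral_lintegral_swap hφ'.aemeasurable]
  simp [lintegral_sub_right_eq_self]

variable {Y : Type*} [NormedAddCommGroup Y] [NormedSpace ℝ Y] {F : 𝔼 n → Y} {C : ℝ}

theorem martingale_heat_heatWalk [CompleteSpace Y] (hF : StronglyMeasurable F)
    (hC : ∀ x, ‖F x‖ ≤ C) {r : ℝ} (hr : 0 < r) (x : 𝔼 n) :
    Martingale (fun k ω => heat (r / 2 ^ k) F (x - ∑ i ∈ Finset.range (k + 1), ω i))
      Filtration.piLE (heatWalk n r) := by
  have hpos (k : ℕ) : 0 < r / 2 ^ k := by positivity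
  have (k : ℕ) : IsProbabilityMeasure (heatMeasure n (r / 2 ^ k)) :=
    isProbabilityMeasure_heatMeasure n (hpos k)
  refine martingale_comp_sum_range _ (g := fun k z => heat (r / 2 ^ k) F (x - z))
    (fun k => ((continuous_heat hF hC (hpos k)).comp (continuous_sub_left x)).stronglyMeasurable)
    (fun k z => norm_heat_le hC (hpos k) _) fun k z => ?_
  have hhalf : r / 2 ^ k = r / 2 ^ (k + 1) + r / 2 ^ (k + 1) := by ring
  rw [hhalf, ← heat_heat hF hC (hpos _) (hpos _), heat_eq_integral_heatMeasure (hpos _)]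
  simp only [sub_sub]

theorem enorm_heat_rpow_le {q : ℝ} (hq : 1 ≤ q) (hF : StronglyMeasurable F) {t : ℝ} (ht : 0 < t)
    (x : 𝔼 n) : ‖heat t F x‖ₑ ^ q ≤ ∫⁻ z, ‖F (x - z)‖ₑ ^ q ∂heatMeasure n t := by
  have := isProbabilityMeasure_heatMeasure n ht
  calc ‖heat t F x‖ₑ ^ q ≤ (∫⁻ z, ‖F (x - z)‖ₑ ∂heatMeasure n t) ^ q := by
        gcongr
        exact enorm_heat_le F ht x
    _ ≤ ∫⁻ z, ‖F (x - z)‖ₑ ^ q ∂heatMeasure n t :=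
        lintegral_rpow_le_lintegral_rpow _ hq
          (hF.comp_measurable (by fun_prop)).enorm.aemeasurable

theorem lintegral_heat_heatWalk_le {q : ℝ} (hq : 1 ≤ q) (hF : StronglyMeasurable F) {r : ℝ}
    (hr : 0 < r) (x : 𝔼 n) (k : ℕ) :
    ∫⁻ ω, ‖heat (r / 2 ^ k) F (x - ∑ i ∈ Finset.range (k + 1), ω i)‖ₑ ^ q ∂heatWalk n r ≤
      ∫⁻ z, ‖F (x - z)‖ₑ ^ q ∂heatMeasure n (2 * r) := by
  have hk : 0 < r / 2 ^ k := by positivity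
  have := isProbabilityMeasure_heatMeasure n hk
  have hFq : Measurable fun z => ‖F (x - z)‖ₑ ^ q :=
    (hF.comp_measurable (by fun_prop)).enorm.pow_const q
  have hlaw := heatWalk_map_sum_conv_heatMeasure (n := n) hr (k + 1)
  rw [show 2 * r / 2 ^ (k + 1) = r / 2 ^ k by ring] at hlaw
  rw [← hlaw, Measure.lintegral_conv hFq, lintegral_map (by fun_prop) (by fun_prop)]
  refine lintegral_mono fun ω => ?_
  simpa only [sub_sub] using enorm_heat_rpow_le hq hF hk (x - ∑ i ∈ Finset.range (k + 1), ω i)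

theorem tsum_lintegral_heatWalk_le [CompleteSpace Y] {q m : ℝ} (hq : 1 ≤ q)
    (hY : MartCotypeBound q Y m) (hF : StronglyMeasurable F) (hC : ∀ x, ‖F x‖ ≤ C) {r : ℝ}
    (hr : 0 < r) (x : 𝔼 n) :
    ∑' k : ℕ, ∫⁻ ω, ‖heat (r / 2 ^ (k + 1)) F (x - ∑ i ∈ Finset.range (k + 2), ω i) -
        heat (r / 2 ^ k) F (x - ∑ i ∈ Finset.range (k + 1), ω i)‖ₑ ^ q ∂heatWalk n r ≤
      ENNReal.ofReal m ^ q * ∫⁻ z, ‖F (x - z)‖ₑ ^ q ∂heatMeasure n (2 * r) := by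
  have := isProbabilityMeasure_heatWalk (n := n) hr
  exact hY _ _ _ _ (martingale_heat_heatWalk hF hC hr x) _ (lintegral_heat_heatWalk_le hq hF hr x)

theorem heat_sub_heat_three_mul [CompleteSpace Y] (hF : StronglyMeasurable F)
    (hC : ∀ x, ‖F x‖ ≤ C) {t : ℝ} (ht : 0 < t) (x : 𝔼 n) : heat t F x - heat (3 * t) F x =
      ∫ z, (heat t F x - heat (2 * t) F (x + z)) ∂heatMeasure n t := by
  have ht2 : 0 < 2 * t := by positivity
  have := isProbabilityMeasure_heatMeasure n ht
  have hint : Integrable (fun z => heat (2 * t) F (x + z)) (heatMeasure n t) :=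
    .of_bound ((continuous_heat hF hC ht2).comp
      (continuous_const_add x)).aestronglyMeasurable C (.of_forall fun z => norm_heat_le hC ht2 _)
  rw [integral_sub (integrable_const _) hint, ← heat_eq_integral_add ht, heat_heat hF hC ht ht2,
    show t + 2 * t = 3 * t by ring]
  simp

theorem lintegral_heat_sub_heat_three_mul_le [CompleteSpace Y] {q : ℝ} (hq : 1 ≤ q)
    (hF : StronglyMeasurable F) (hC : ∀ x, ‖F x‖ ≤ C) {t : ℝ} (ht : 0 < t) :
    ∫⁻ x, ‖heat t F x - heat (3 * t) F x‖ₑ ^ q ≤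
      ∫⁻ z, (∫⁻ x, ‖heat t F x - heat (2 * t) F (x + z)‖ₑ ^ q) ∂heatMeasure n t := by
  have := isProbabilityMeasure_heatMeasure n ht
  have hcont : Continuous fun p : 𝔼 n × 𝔼 n => heat t F p.1 - heat (2 * t) F (p.1 + p.2) :=
    ((continuous_heat hF hC ht).comp continuous_fst).sub
      ((continuous_heat hF hC (by positivity : 0 < 2 * t)).comp continuous_add)
  rw [← lintegral_lintegral_swap (hcont.stronglyMeasurable.enorm.pow_const q).aemeasurable]
  gcongr with x
  rw [heat_sub_heat_three_mul hF hC ht x]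
  calc ‖∫ z, (heat t F x - heat (2 * t) F (x + z)) ∂heatMeasure n t‖ₑ ^ q
      ≤ (∫⁻ z, ‖heat t F x - heat (2 * t) F (x + z)‖ₑ ∂heatMeasure n t) ^ q := by
        gcongr
        exact enorm_integral_le_lintegral_enorm _
    _ ≤ ∫⁻ z, ‖heat t F x - heat (2 * t) F (x + z)‖ₑ ^ q ∂heatMeasure n t :=
        lintegral_rpow_le_lintegral_rpow _ hq
          (hcont.comp (Continuous.prodMk_right x)).stronglyMeasurable.enorm.aemeasurable

theorem lintegral_heat_sub_heat_three_mul_le_heatWalk [CompleteSpace Y] {q : ℝ} (hq : 1 ≤ q)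
    (hF : StronglyMeasurable F) (hC : ∀ x, ‖F x‖ ≤ C) {r : ℝ} (hr : 0 < r) (k : ℕ) :
    ∫⁻ x, ‖heat (r / 2 ^ (k + 1)) F x - heat (3 * (r / 2 ^ (k + 1))) F x‖ₑ ^ q ≤
      ∫⁻ ω, (∫⁻ x, ‖heat (r / 2 ^ (k + 1)) F (x - ∑ i ∈ Finset.range (k + 2), ω i) -
        heat (r / 2 ^ k) F (x - ∑ i ∈ Finset.range (k + 1), ω i)‖ₑ ^ q) ∂heatWalk n r := by
  have (k : ℕ) : IsProbabilityMeasure (heatMeasure n (r / 2 ^ k)) :=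
    isProbabilityMeasure_heatMeasure n (by positivity)
  have hmeas : Measurable fun z => ∫⁻ x, ‖heat (r / 2 ^ (k + 1)) F x -
      heat (r / 2 ^ k) F (x + z)‖ₑ ^ q := by
    refine Measurable.lintegral_prod_left' (f := fun p : 𝔼 n × 𝔼 n =>
      ‖heat (r / 2 ^ (k + 1)) F p.1 - heat (r / 2 ^ k) F (p.1 + p.2)‖ₑ ^ q) ?_
    exact ((stronglyMeasurable_heat measurable_const measurable_fst hF).sub
      (stronglyMeasurable_heat measurable_const measurable_add hF)).enorm.pow_const q
  refine (lintegral_heat_sub_heat_three_mul_le hq hF hC (by positivity)).trans_eq ?_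
  rw [show 2 * (r / 2 ^ (k + 1)) = r / 2 ^ k by ring, heatWalk,
    ← Measure.infinitePi_map_eval (fun k => heatMeasure n (r / 2 ^ k)) (k + 1),
    lintegral_map hmeas (measurable_pi_apply (k + 1))]
  refine lintegral_congr fun ω => ?_
  rw [← lintegral_sub_right_eq_self _ (∑ i ∈ Finset.range (k + 2), ω i)]
  refine lintegral_congr fun x => ?_
  rw [Finset.sum_range_succ _ (k + 1), sub_add_eq_sub_sub, sub_add_cancel]

theorem tsum_lintegral_heat_sub_heat_three_mul_le [CompleteSpace Y] {q m : ℝ} (hq : 1 ≤ q)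
    (hY : MartCotypeBound q Y m) (hF : StronglyMeasurable F) (hC : ∀ x, ‖F x‖ ≤ C) {r : ℝ}
    (hr : 0 < r) :
    ∑' k : ℕ, ∫⁻ x, ‖heat (r / 2 ^ (k + 1)) F x - heat (3 * (r / 2 ^ (k + 1))) F x‖ₑ ^ q ≤
      ENNReal.ofReal m ^ q * ∫⁻ x, ‖F x‖ₑ ^ q := by
  have := isProbabilityMeasure_heatWalk (n := n) hr
  have := isProbabilityMeasure_heatMeasure n (by positivity : 0 < 2 * r)
  have hFq : Measurable fun x => ‖F x‖ₑ ^ q := hF.enorm.pow_const q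
  let D (k : ℕ) (x : 𝔼 n) (ω : ℕ → 𝔼 n) : ℝ≥0∞ :=
    ‖heat (r / 2 ^ (k + 1)) F (x - ∑ i ∈ Finset.range (k + 2), ω i) -
      heat (r / 2 ^ k) F (x - ∑ i ∈ Finset.range (k + 1), ω i)‖ₑ ^ q
  have hD (k : ℕ) : Measurable (Function.uncurry (D k)) :=
    ((stronglyMeasurable_heat measurable_const (by fun_prop) hF).sub
      (stronglyMeasurable_heat measurable_const (by fun_prop) hF)).enorm.pow_const q
  calc ∑' k : ℕ, ∫⁻ x, ‖heat (r / 2 ^ (k + 1)) F x - heat (3 * (r / 2 ^ (k + 1))) F x‖ₑ ^ q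
      ≤ ∑' k : ℕ, ∫⁻ ω, (∫⁻ x, D k x ω) ∂heatWalk n r :=
        ENNReal.tsum_le_tsum (lintegral_heat_sub_heat_three_mul_le_heatWalk hq hF hC hr)
    _ = ∑' k : ℕ, ∫⁻ x, ∫⁻ ω, D k x ω ∂heatWalk n r :=
        tsum_congr fun k => (lintegral_lintegral_swap (hD k).aemeasurable).symm
    _ = ∫⁻ x, ∑' k : ℕ, ∫⁻ ω, D k x ω ∂heatWalk n r :=
        (lintegral_tsum fun k => (hD k).lintegral_prod_right'.aemeasurable).symm
    _ ≤ ∫⁻ x, ENNReal.ofReal m ^ q * ∫⁻ z, ‖F (x - z)‖ₑ ^ q ∂heatMeasure n (2 * r) :=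
        lintegral_mono fun x => tsum_lintegral_heatWalk_le hq hY hF hC hr x
    _ = ENNReal.ofReal m ^ q * ∫⁻ x, ‖F x‖ₑ ^ q := by
        have hmeas : Measurable fun p : 𝔼 n × 𝔼 n => ‖F (p.1 - p.2)‖ₑ ^ q :=
          hFq.comp (by fun_prop)
        rw [lintegral_const_mul _ hmeas.lintegral_prod_right', lintegral_lintegral_comp_sub _ hFq]

end LittlewoodPaley

/-! ### The Littlewood–Paley inequality in continuous time -/

section ContinuousTime

theorem tsum_int_le_of_tsum_nat_le {a : ℤ → ℝ≥0∞} {B : ℝ≥0∞}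
    (h : ∀ J : ℤ, ∑' k : ℕ, a (J - (k + 1)) ≤ B) : ∑' i, a i ≤ B := by
  refine ENNReal.summable.tsum_le_of_sum_le fun s => ?_
  obtain ⟨J, hJ⟩ := s.exists_le
  have hinj : Set.InjOn (fun i => (J - i).toNat) s := fun i hi j hj hij => by
    have := hJ i hi
    have := hJ j hj
    simp only at hij
    omega
  calc ∑ i ∈ s, a i = ∑ k ∈ s.image fun i => (J - i).toNat, a (J + 1 - (k + 1)) := by
        rw [Finset.sum_image hinj]
        refine Finset.sum_congr rfl fun i hi => ?_
        have := hJ i hi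
        congr 1
        omega
    _ ≤ ∑' k : ℕ, a (J + 1 - (k + 1)) := ENNReal.sum_le_tsum _
    _ ≤ B := h (J + 1)

theorem lintegral_eq_tsum_setLIntegral_Ioc_add_zsmul (Φ : ℝ → ℝ≥0∞) {c : ℝ} (hc : 0 < c) :
    ∫⁻ y, Φ y = ∑' i : ℤ, ∫⁻ y in Ioc 0 c, Φ (y + i • c) := by
  calc ∫⁻ y, Φ y = ∑' i : ℤ, ∫⁻ y in Ioc (i • c) ((i + 1) • c), Φ y := by
        rw [← lintegral_iUnion (fun i => measurableSet_Ioc) (pairwise_disjoint_Ioc_zsmul c),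
          iUnion_Ioc_zsmul hc, Measure.restrict_univ]
    _ = ∑' i : ℤ, ∫⁻ y in Ioc 0 c, Φ (y + i • c) := by
        refine tsum_congr fun i => ?_
        rw [← (measurePreserving_add_right (volume : Measure ℝ)
          (i • c)).setLIntegral_comp_preimage_emb (measurableEmbedding_addRight _)]
        simp [add_smul, add_comm]

theorem lintegral_le_of_tsum_log_div_two_pow_le {Φ : ℝ → ℝ≥0∞} (hΦ : Measurable Φ) {B : ℝ≥0∞}
    (h : ∀ r > 0, ∑' k : ℕ, Φ (Real.log (r / 2 ^ (k + 1))) ≤ B) : ∫⁻ y, Φ y ≤ B := by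
  have hshift (i : ℤ) : Measurable fun y => Φ (y + i • Real.log 2) := hΦ.comp (by fun_prop)
  rw [lintegral_eq_tsum_setLIntegral_Ioc_add_zsmul Φ (Real.log_pos one_lt_two),
    ← lintegral_tsum fun i => (hshift i).aemeasurable]
  calc ∫⁻ y in Ioc 0 (Real.log 2), ∑' i : ℤ, Φ (y + i • Real.log 2)
      ≤ ∫⁻ _ in Ioc 0 (Real.log 2), B := by
        refine lintegral_mono fun y => tsum_int_le_of_tsum_nat_le fun J => ?_
        refine le_of_eq_of_le (tsum_congr fun k => ?_)
          (h (Real.exp (y + J • Real.log 2)) (Real.exp_pos _))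
        rw [Real.log_div (Real.exp_pos _).ne' (by positivity), Real.log_exp, Real.log_pow]
        simp only [zsmul_eq_mul]
        push_cast
        ring_nf
    _ ≤ B := by
        rw [setLIntegral_const, Real.volume_Ioc, sub_zero]
        refine mul_le_of_le_one_right' (ENNReal.ofReal_le_one.2 ?_)
        linarith [Real.log_two_lt_d9]

theorem lintegral_comp_two_mul_add_le {Φ : ℝ → ℝ≥0∞} (hΦ : Measurable Φ) (b : ℝ) :
    ∫⁻ y, Φ (2 * y + b) ≤ ∫⁻ y, Φ y := by
  have hadd : Measurable fun y => Φ (y + b) := hΦ.comp (measurable_add_const b)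
  rw [← lintegral_map hadd (measurable_const_mul (2 : ℝ)), Real.map_volume_mul_left two_ne_zero,
    lintegral_smul_measure, lintegral_add_right_eq_self Φ b]
  refine mul_le_of_le_one_left' (ENNReal.ofReal_le_one.2 ?_)
  rw [abs_of_pos (by norm_num)]
  norm_num

variable {n : ℕ} {Y : Type*} [NormedAddCommGroup Y] [NormedSpace ℝ Y]

theorem eLpNorm'_heat_sub_heat_three_mul_le [CompleteSpace Y] {q m : ℝ} (hq : 1 ≤ q)
    (hY : MartCotypeBound q Y m) {F : 𝔼 n → Y} {C : ℝ} (hF : StronglyMeasurable F)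
    (hC : ∀ x, ‖F x‖ ≤ C) :
    eLpNorm' (fun p : ℝ × 𝔼 n => heat (Real.exp p.1) F p.2 - heat (3 * Real.exp p.1) F p.2) q
        (volume.prod volume) ≤ ENNReal.ofReal m * eLpNorm' F q volume := by
  have hq0 : 0 < q := by linarith
  have hmeas : Measurable fun p : ℝ × 𝔼 n =>
      ‖heat (Real.exp p.1) F p.2 - heat (3 * Real.exp p.1) F p.2‖ₑ ^ q :=
    ((stronglyMeasurable_heat (by fun_prop) (by fun_prop) hF).sub
      (stronglyMeasurable_heat (by fun_prop) (by fun_prop) hF)).enorm.pow_const q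
  rw [← ENNReal.rpow_le_rpow_iff hq0, ENNReal.mul_rpow_of_nonneg _ _ hq0.le, eLpNorm'_rpow hq0,
    eLpNorm'_rpow hq0, lintegral_prod _ hmeas.aemeasurable]
  refine lintegral_le_of_tsum_log_div_two_pow_le hmeas.lintegral_prod_right' fun r hr => ?_
  refine le_of_eq_of_le (tsum_congr fun k => ?_)
    (tsum_lintegral_heat_sub_heat_three_mul_le hq hY hF hC hr)
  simp only [Real.exp_log (show 0 < r / 2 ^ (k + 1) by positivity)]

/-- The `L_q` norm of `∂_w (H_u - H_{3u}) f`, a Littlewood–Paley piece of `∂_w f` at scale `√u`. -/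
def heatDerivGap (q : ℝ) (f : 𝔼 n → Y) (w : 𝔼 n) (u : ℝ) : ℝ≥0∞ :=
  eLpNorm' (fun x => heatDeriv f w u x - heatDeriv f w (3 * u) x) q volume

/-- The constant `m L (2 |supp f|)^{1/q}`; times `N w`, it bounds the Littlewood–Paley square
function of `∂_w f` when `f` is `L`-Lipschitz for `N` and `m` is a martingale cotype bound. -/
def squareFunctionBound (q m L : ℝ) (f : 𝔼 n → Y) : ℝ≥0∞ :=
  ENNReal.ofReal m * ENNReal.ofReal L * (2 * volume (tsupport f)) ^ (1 / q)

namespace CompactLip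

variable {N : 𝔼 n → ℝ} {L : ℝ} {f : 𝔼 n → Y}

theorem eLpNorm'_diffQuot_le (hf : CompactLip N L f) {q : ℝ} (hq : 0 < q) (w : 𝔼 n) (k : ℕ) :
    eLpNorm' (diffQuot f w k) q volume ≤
      ENNReal.ofReal (L * N w) * (2 * volume (tsupport f)) ^ (1 / q) := by
  set a : 𝔼 n := ((k : ℝ) + 1)⁻¹ • w
  set S : Set (𝔼 n) := (· + a) ⁻¹' tsupport f ∪ tsupport f
  have hmeas : MeasurableSet (tsupport f) := (isClosed_tsupport f).measurableSet
  have hS : MeasurableSet S := (measurable_add_const a hmeas).union hmeas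
  have hvol : volume S ≤ 2 * volume (tsupport f) := by
    refine (measure_union_le _ _).trans ?_
    rw [measure_preimage_add_right, two_mul]
  have hpt (x : 𝔼 n) : ‖diffQuot f w k x‖ₑ ^ q ≤
      S.indicator (fun _ => ENNReal.ofReal (L * N w) ^ q) x := by
    by_cases hx : x ∈ S
    · rw [indicator_of_mem hx, ← ofReal_norm]
      gcongr
      exact hf.norm_diffQuot_le w k x
    · have hfa : f (x + a) = 0 := image_eq_zero_of_notMem_tsupport fun h => hx (Or.inl h)
      have hfx : f x = 0 := image_eq_zero_of_notMem_tsupport fun h => hx (Or.inr h)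
      have hzero : diffQuot f w k x = 0 := by simp [diffQuot, a, hfa, hfx]
      simp [hzero, hq]
  rw [← ENNReal.rpow_le_rpow_iff hq, eLpNorm'_rpow hq, ENNReal.mul_rpow_of_nonneg _ _ hq.le,
    one_div, ENNReal.rpow_inv_rpow hq.ne']
  calc ∫⁻ x, ‖diffQuot f w k x‖ₑ ^ q
      ≤ ∫⁻ x, S.indicator (fun _ => ENNReal.ofReal (L * N w) ^ q) x := lintegral_mono hpt
    _ = ENNReal.ofReal (L * N w) ^ q * volume S := lintegral_indicator_const hS _
    _ ≤ ENNReal.ofReal (L * N w) ^ q * (2 * volume (tsupport f)) := by gcongr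

theorem stronglyMeasurable_heatDeriv_sub (hf : CompactLip N L f) {P : Type*} [MeasurableSpace P]
    {a : P → ℝ} {b c : P → 𝔼 n} (ha : Measurable a) (ha0 : ∀ p, 0 < a p) (hb : Measurable b)
    (hc : Measurable c) :
    StronglyMeasurable fun p =>
      heatDeriv f (c p) (a p) (b p) - heatDeriv f (c p) (3 * a p) (b p) :=
  (hf.stronglyMeasurable_heatDeriv ha ha0 hb hc).sub
    (hf.stronglyMeasurable_heatDeriv (ha.const_mul 3) (fun p => mul_pos three_pos (ha0 p)) hb hc)

theorem measurable_heatDerivGap (hf : CompactLip N L f) (q : ℝ) {P : Type*} [MeasurableSpace P]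
    {a : P → ℝ} {c : P → 𝔼 n} (ha : Measurable a) (ha0 : ∀ p, 0 < a p) (hc : Measurable c) :
    Measurable fun p => heatDerivGap q f (c p) (a p) := by
  exact measurable_eLpNorm' volume q
    (hf.stronglyMeasurable_heatDeriv_sub (P := P × 𝔼 n) (ha.comp measurable_fst)
      (fun p => ha0 p.1) measurable_snd (hc.comp measurable_fst)).enorm

theorem eLpNorm'_heatDerivGap_exp_le [CompleteSpace Y] (hf : CompactLip N L f) {q m : ℝ}
    (hq : 1 ≤ q) (hY : MartCotypeBound q Y m) (w : 𝔼 n) :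
    eLpNorm' (fun y : ℝ => heatDerivGap q f w (Real.exp y)) q volume ≤
      squareFunctionBound q m L f * ENNReal.ofReal (N w) := by
  have hq0 : 0 < q := by linarith
  let T (k : ℕ) (p : ℝ × 𝔼 n) : Y :=
    heat (Real.exp p.1) (diffQuot f w k) p.2 - heat (3 * Real.exp p.1) (diffQuot f w k) p.2
  have hT (k : ℕ) : StronglyMeasurable (T k) :=
    (stronglyMeasurable_heat (by fun_prop) (by fun_prop) (hf.stronglyMeasurable_diffQuot w k)).sub
      (stronglyMeasurable_heat (by fun_prop) (by fun_prop) (hf.stronglyMeasurable_diffQuot w k))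
  have hlim (p : ℝ × 𝔼 n) : Filter.Tendsto (fun k => T k p) .atTop
      (nhds (heatDeriv f w (Real.exp p.1) p.2 - heatDeriv f w (3 * Real.exp p.1) p.2)) :=
    (hf.tendsto_heat_diffQuot w p.2 (Real.exp_pos p.1)).sub
      (hf.tendsto_heat_diffQuot w p.2 (by positivity))
  have hmeas : StronglyMeasurable fun p : ℝ × 𝔼 n =>
      heatDeriv f w (Real.exp p.1) p.2 - heatDeriv f w (3 * Real.exp p.1) p.2 :=
    stronglyMeasurable_of_tendsto .atTop hT (tendsto_pi_nhds.2 hlim)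
  calc eLpNorm' (fun y : ℝ => heatDerivGap q f w (Real.exp y)) q volume
      = eLpNorm' (fun p : ℝ × 𝔼 n =>
          heatDeriv f w (Real.exp p.1) p.2 - heatDeriv f w (3 * Real.exp p.1) p.2) q
          (volume.prod volume) := by
        exact (eLpNorm'_prod _ _ hq0 hmeas.enorm).symm
    _ ≤ Filter.liminf (fun k => eLpNorm' (T k) q (volume.prod volume)) .atTop :=
        Lp.eLpNorm'_lim_le_liminf_eLpNorm' hq0 (fun k => (hT k).aestronglyMeasurable)
          (.of_forall hlim)
    _ ≤ Filter.liminf (fun _ : ℕ => squareFunctionBound q m L f * ENNReal.ofReal (N w)) .atTop := by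
        refine Filter.liminf_le_liminf (.of_forall fun k => ?_)
        refine (eLpNorm'_heat_sub_heat_three_mul_le hq hY (hf.stronglyMeasurable_diffQuot w k)
          (hf.norm_diffQuot_le w k)).trans ((mul_le_mul_right
            (hf.eLpNorm'_diffQuot_le hq0 w k) _).trans_eq ?_)
        rw [squareFunctionBound, ENNReal.ofReal_mul hf.nonneg]
        ring
    _ = squareFunctionBound q m L f * ENNReal.ofReal (N w) := Filter.liminf_const _

theorem eLpNorm'_heatDerivGap_mul_exp_le [CompleteSpace Y] (hf : CompactLip N L f) {q m : ℝ}
    (hq : 1 ≤ q) (hY : MartCotypeBound q Y m) (w : 𝔼 n) {c : ℝ} (hc : 0 < c) :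
    eLpNorm' (fun y : ℝ => heatDerivGap q f w (c * Real.exp (2 * y))) q volume ≤
      squareFunctionBound q m L f * ENNReal.ofReal (N w) := by
  refine le_trans ?_ (hf.eLpNorm'_heatDerivGap_exp_le hq hY w)
  have hmeas : Measurable fun y => heatDerivGap q f w (Real.exp y) ^ q :=
    (hf.measurable_heatDerivGap q (by fun_prop) (fun _ => Real.exp_pos _)
      measurable_const).pow_const q
  have hexp (y : ℝ) : c * Real.exp (2 * y) = Real.exp (2 * y + Real.log c) := by
    rw [Real.exp_add, Real.exp_log hc, mul_comm]
  simp only [eLpNorm'_eq_lintegral_enorm, enorm_eq_self, hexp]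
  refine ENNReal.rpow_le_rpow ?_ (by positivity)
  exact lintegral_comp_two_mul_add_le hmeas (Real.log c)

end CompactLip

end ContinuousTime

/-! ### The first-order Taylor remainder of the heat semigroup -/

section TaylorRemainder

theorem one_div_sqrt_two_pow_le (k : ℕ) : 1 / √(2 ^ k) ≤ (3 / 4 : ℝ) ^ k := by
  have hsqrt : √(2 ^ k) = √2 ^ k := by
    rw [Real.sqrt_eq_iff_eq_sq (by positivity) (by positivity), ← pow_mul, mul_comm, pow_mul,
      Real.sq_sqrt (by norm_num)]
  have htwo : (4 / 3 : ℝ) ≤ √2 := Real.le_sqrt_of_sq_le (by norm_num)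
  rw [div_le_iff₀ (by positivity), hsqrt, ← mul_pow]
  exact one_le_pow₀ (by linarith)

theorem tsum_ofReal_div_sqrt_two_pow_le {C : ℝ} (hC : 0 ≤ C) :
    ∑' k : ℕ, ENNReal.ofReal (C / √(2 ^ k)) ≤ ENNReal.ofReal (4 * C) := by
  have hsum : Summable fun k : ℕ => C * (3 / 4 : ℝ) ^ k :=
    (summable_geometric_of_lt_one (by norm_num) (by norm_num)).mul_left C
  have hsum_eq : ∑' k : ℕ, C * (3 / 4 : ℝ) ^ k = 4 * C := by
    rw [tsum_mul_left, tsum_geometric_of_lt_one (by norm_num) (by norm_num)]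
    ring
  rw [← hsum_eq, ENNReal.ofReal_tsum_of_nonneg (fun k => by positivity) hsum]
  refine ENNReal.tsum_le_tsum fun k => ENNReal.ofReal_le_ofReal ?_
  rw [div_eq_mul_one_div]
  exact mul_le_mul_of_nonneg_left (one_div_sqrt_two_pow_le k) hC

theorem tendsto_div_sqrt_two_pow_mul {s : ℝ} (hs : 0 < s) (C : ℝ) :
    Filter.Tendsto (fun k : ℕ => C / √(2 ^ k * s)) .atTop (nhds 0) :=
  tendsto_const_nhds.div_atTop <| Real.tendsto_sqrt_atTop.comp <|
    (tendsto_pow_atTop_atTop_of_one_lt (one_lt_two (α := ℝ))).atTop_mul_const hs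

theorem sqrt_mul_exp_two_mul {c : ℝ} (hc : 0 ≤ c) (y : ℝ) :
    √(c * Real.exp (2 * y)) = √c * Real.exp y := by
  rw [Real.sqrt_mul hc, two_mul, Real.exp_add, Real.sqrt_mul_self (Real.exp_pos y).le]

theorem enorm_le_tsum_enorm_sub_succ {E : Type*} [NormedAddCommGroup E] {a : ℕ → E}
    (ha : Filter.Tendsto a .atTop (nhds 0)) : ‖a 0‖ₑ ≤ ∑' k, ‖a k - a (k + 1)‖ₑ := by
  simpa only [edist_zero_right] using edist_le_tsum_of_edist_le_of_tendsto₀ _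
    (fun k => (edist_eq_enorm_sub (a k) (a (k + 1))).le) ha

variable {n : ℕ} {Y : Type*} [NormedAddCommGroup Y] [NormedSpace ℝ Y]

/-- The first-order Taylor remainder of `H_s f` at `x`, for the increment `t w`. -/
def heatTaylorRemainder (f : 𝔼 n → Y) (s t : ℝ) (w x : 𝔼 n) : Y :=
  heat s f (x + t • w) - heat s f x - t • heatDeriv f w s x

namespace CompactLip

variable {N : 𝔼 n → ℝ} {L : ℝ} {f : 𝔼 n → Y}

theorem norm_heatDeriv_sub_le (hf : CompactLip N L f) (w : 𝔼 n) {u : ℝ} (hu : 0 < u) (x : 𝔼 n) :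
    ‖heatDeriv f w u x - heatDeriv f w (3 * u) x‖ ≤ L * N w + L * N w :=
  norm_sub_le_of_le (hf.norm_heatDeriv_le w hu x) (hf.norm_heatDeriv_le w (by positivity) x)

theorem stronglyMeasurable_heatDeriv_sub_right (hf : CompactLip N L f) (w : 𝔼 n) {u : ℝ}
    (hu : 0 < u) : StronglyMeasurable fun x => heatDeriv f w u x - heatDeriv f w (3 * u) x :=
  (hf.stronglyMeasurable_heatDeriv_right w hu).sub
    (hf.stronglyMeasurable_heatDeriv_right w (by positivity))

theorem heat_heatDeriv_sub (hf : CompactLip N L f) (w : 𝔼 n) {u v : ℝ} (hu : 0 < u) (hv : 0 < v)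
    (x : 𝔼 n) : heat v (fun x => heatDeriv f w u x - heatDeriv f w (3 * u) x) x =
      heatDeriv f w (v + u) x - heatDeriv f w (v + 3 * u) x := by
  have hu3 : 0 < 3 * u := by positivity
  rw [heat_sub (hf.stronglyMeasurable_heatDeriv_right w hu) (hf.norm_heatDeriv_le w hu)
    (hf.stronglyMeasurable_heatDeriv_right w hu3) (hf.norm_heatDeriv_le w hu3) hv,
    hf.heat_heatDeriv w hv hu, hf.heat_heatDeriv w hv hu3]

theorem tendsto_heatDeriv_add_sub (hf : CompactLip N L f) (w v : 𝔼 n) {s : ℝ} (hs : 0 < s)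
    (x : 𝔼 n) :
    Filter.Tendsto (fun k : ℕ => heatDeriv f w (2 ^ k * s) (x + v) - heatDeriv f w (2 ^ k * s) x)
      .atTop (nhds 0) := by
  refine squeeze_zero_norm (fun k => ?_)
    (tendsto_div_sqrt_two_pow_mul (half_pos hs) (L * N w * (3 * ‖v‖)))
  have hu : 0 < 2 ^ k * (s / 2) := by positivity
  have hlip := norm_heat_add_sub_heat_le (hf.stronglyMeasurable_heatDeriv_right w hu)
    (hf.norm_heatDeriv_le w hu) hu x v
  rw [hf.heat_heatDeriv w hu hu, hf.heat_heatDeriv w hu hu, ← mul_add, add_halves] at hlip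
  rwa [mul_div_assoc]

theorem enorm_heatDeriv_add_sub_le (hf : CompactLip N L f) (w v : 𝔼 n) {s : ℝ} (hs : 0 < s)
    (x : 𝔼 n) :
    let D (u : ℝ) (x : 𝔼 n) := heatDeriv f w u x - heatDeriv f w (3 * u) x
    ‖heatDeriv f w s (x + v) - heatDeriv f w s x‖ₑ ≤ ∑' k : ℕ,
      ‖heat (2 ^ k * (s / 2)) (D (2 ^ k * (s / 2))) (x + v) -
        heat (2 ^ k * (s / 2)) (D (2 ^ k * (s / 2))) x‖ₑ := by
  intro D
  have htel := enorm_le_tsum_enorm_sub_succ (hf.tendsto_heatDeriv_add_sub w v hs x)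
  rw [pow_zero, one_mul] at htel
  refine htel.trans_eq (tsum_congr fun k => ?_)
  have hu : 0 < 2 ^ k * (s / 2) := by positivity
  rw [hf.heat_heatDeriv_sub w hu hu, hf.heat_heatDeriv_sub w hu hu,
    show 2 ^ k * (s / 2) + 2 ^ k * (s / 2) = 2 ^ k * s by ring,
    show 2 ^ k * (s / 2) + 3 * (2 ^ k * (s / 2)) = 2 ^ (k + 1) * s by ring]
  congr 1
  abel

theorem eLpNorm'_heatDeriv_add_sub_le (hf : CompactLip N L f) {q : ℝ} (hq : 1 ≤ q) (w v : 𝔼 n)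
    {s : ℝ} (hs : 0 < s) :
    eLpNorm' (fun x => heatDeriv f w s (x + v) - heatDeriv f w s x) q volume ≤ ∑' k : ℕ,
      ENNReal.ofReal (6 * ‖v‖ / √s / √(2 ^ k)) * heatDerivGap q f w (2 ^ k * (s / 2)) := by
  refine (eLpNorm'_le_of_enorm_le _ (by linarith) (hf.enorm_heatDeriv_add_sub_le w v hs)).trans ?_
  refine (eLpNorm'_tsum_le _ hq fun k => ?_).trans (ENNReal.tsum_le_tsum fun k => ?_)
  · have hu : 0 < 2 ^ k * (s / 2) := by positivity
    have hD := hf.stronglyMeasurable_heatDeriv_sub_right w hu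
    exact ((stronglyMeasurable_heat measurable_const (measurable_add_const v) hD).sub
      (stronglyMeasurable_heat measurable_const measurable_id hD)).enorm
  · have hu : 0 < 2 ^ k * (s / 2) := by positivity
    refine (eLpNorm'_heat_add_sub_heat_le hq (hf.stronglyMeasurable_heatDeriv_sub_right w hu)
      (hf.norm_heatDeriv_sub_le w hu) hu v).trans ?_
    rw [heatDerivGap]
    refine mul_le_mul_left (ENNReal.ofReal_le_ofReal ?_) _
    have htwo : √2 ≤ 2 := Real.sqrt_le_iff.2 (by norm_num)
    rw [Real.sqrt_mul (by positivity), Real.sqrt_div hs.le]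
    calc 3 * ‖v‖ / (√(2 ^ k) * (√s / √2)) = 3 * √2 * ‖v‖ / √s / √(2 ^ k) := by field_simp
      _ ≤ 3 * 2 * ‖v‖ / √s / √(2 ^ k) := by gcongr
      _ = 6 * ‖v‖ / √s / √(2 ^ k) := by norm_num

variable [CompleteSpace Y]

theorem enorm_heatTaylorRemainder_le (hf : CompactLip N L f) {s t : ℝ} (hs : 0 < s) (ht : 0 ≤ t)
    (w x : 𝔼 n) : ‖heatTaylorRemainder f s t w x‖ₑ ≤
      ∫⁻ r in Ioc 0 t, ‖heatDeriv f w s (x + r • w) - heatDeriv f w s x‖ₑ := by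
  have hcont : Continuous fun r : ℝ => heatDeriv f w s (x + r • w) :=
    (hf.continuous_heatDeriv w hs).comp (by fun_prop)
  have heq : heatTaylorRemainder f s t w x =
      ∫ r in (0 : ℝ)..t, (heatDeriv f w s (x + r • w) - heatDeriv f w s x) := by
    rw [intervalIntegral.integral_sub (hcont.intervalIntegrable _ _) (by simp),
      ← hf.heat_add_smul_sub_heat w x hs, intervalIntegral.integral_const, sub_zero,
      heatTaylorRemainder]
  rw [heq, intervalIntegral.integral_of_le ht]
  exact enorm_integral_le_lintegral_enorm _

theorem eLpNorm'_heatTaylorRemainder_le (hf : CompactLip N L f) {q : ℝ} (hq : 1 ≤ q) {s t : ℝ}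
    (hs : 0 < s) (ht : 0 ≤ t) (w : 𝔼 n) :
    eLpNorm' (heatTaylorRemainder f s t w) q volume ≤ ENNReal.ofReal t * ∑' k : ℕ,
      ENNReal.ofReal (6 * (t * ‖w‖) / √s / √(2 ^ k)) * heatDerivGap q f w (2 ^ k * (s / 2)) := by
  have hmeas : StronglyMeasurable fun p : ℝ × 𝔼 n =>
      heatDeriv f w s (p.2 + p.1 • w) - heatDeriv f w s p.2 :=
    ((hf.stronglyMeasurable_heatDeriv_right w hs).comp_measurable (by fun_prop)).sub
      ((hf.stronglyMeasurable_heatDeriv_right w hs).comp_measurable measurable_snd)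
  set B := ∑' k : ℕ,
    ENNReal.ofReal (6 * (t * ‖w‖) / √s / √(2 ^ k)) * heatDerivGap q f w (2 ^ k * (s / 2))
  have hB : ∀ r ∈ Ioc 0 t,
      eLpNorm' (fun x => heatDeriv f w s (x + r • w) - heatDeriv f w s x) q volume ≤ B := by
    intro r hr
    refine (hf.eLpNorm'_heatDeriv_add_sub_le hq w (r • w) hs).trans ?_
    rw [norm_smul, Real.norm_of_nonneg hr.1.le]
    refine ENNReal.tsum_le_tsum fun k => mul_le_mul_left (ENNReal.ofReal_le_ofReal ?_) _
    gcongr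
    exact hr.2
  calc eLpNorm' (heatTaylorRemainder f s t w) q volume
      ≤ eLpNorm' (fun x => ∫⁻ r in Ioc 0 t,
          ‖heatDeriv f w s (x + r • w) - heatDeriv f w s x‖ₑ) q volume :=
        eLpNorm'_le_of_enorm_le _ (by linarith) (hf.enorm_heatTaylorRemainder_le hs ht w)
    _ ≤ ∫⁻ r in Ioc 0 t, eLpNorm' (fun x =>
          ‖heatDeriv f w s (x + r • w) - heatDeriv f w s x‖ₑ) q volume :=
        eLpNorm'_lintegral_le _ _ hq hmeas.enorm
    _ ≤ ∫⁻ _ in Ioc 0 t, B := by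
        simp only [eLpNorm'_enorm]
        exact setLIntegral_mono measurable_const hB
    _ = ENNReal.ofReal t * B := by
        rw [setLIntegral_const, Real.volume_Ioc, sub_zero, mul_comm]

theorem eLpNorm'_exp_neg_mul_heatTaylorRemainder_le (hf : CompactLip N L f) {q m : ℝ} (hq : 1 ≤ q)
    (hY : MartCotypeBound q Y m) (w : 𝔼 n) {γ : ℝ} (hγ : 0 < γ) :
    eLpNorm' (fun y : ℝ => ENNReal.ofReal (Real.exp (-y)) *
        eLpNorm' (heatTaylorRemainder f (γ * Real.exp (2 * y)) (Real.exp y) w) q volume) q volume ≤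
      ENNReal.ofReal (24 * ‖w‖ / √γ) * (squareFunctionBound q m L f * ENNReal.ofReal (N w)) := by
  have hy (y : ℝ) : ENNReal.ofReal (Real.exp (-y)) *
      eLpNorm' (heatTaylorRemainder f (γ * Real.exp (2 * y)) (Real.exp y) w) q volume ≤
        ∑' k : ℕ, ENNReal.ofReal (6 * ‖w‖ / √γ / √(2 ^ k)) *
          heatDerivGap q f w (2 ^ k * (γ / 2) * Real.exp (2 * y)) := by
    refine (mul_le_mul_right (hf.eLpNorm'_heatTaylorRemainder_le hq (by positivity)
      (Real.exp_pos y).le w) _).trans_eq ?_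
    rw [← mul_assoc, ← ENNReal.ofReal_mul (Real.exp_pos _).le, ← Real.exp_add, neg_add_cancel,
      Real.exp_zero, ENNReal.ofReal_one, one_mul]
    refine tsum_congr fun k => ?_
    rw [sqrt_mul_exp_two_mul hγ.le]
    congr 2
    · field_simp
    · ring
  refine (eLpNorm'_le_of_enorm_le _ (by linarith) hy).trans ?_
  refine (eLpNorm'_tsum_mul_le _ hq _
    (fun k => hf.measurable_heatDerivGap q (by fun_prop) (fun y => by positivity) measurable_const)
    (fun k => hf.eLpNorm'_heatDerivGap_mul_exp_le hq hY w (by positivity))).trans ?_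
  gcongr
  refine (tsum_ofReal_div_sqrt_two_pow_le (by positivity)).trans_eq ?_
  ring_nf

end CompactLip

end TaylorRemainder

/-! ### First moments of the heat kernel -/

section Moments

variable {E : Type*} [NormedAddCommGroup E] [NormedSpace ℝ E] [FiniteDimensional ℝ E]
  [MeasurableSpace E] [BorelSpace E]

theorem lintegral_radial_mul_homogeneous [Nontrivial E] (μ : Measure E) [μ.IsAddHaarMeasure]
    {g : ℝ → ℝ≥0∞} (hg : Measurable g) {F : E → ℝ≥0∞} (hF : Measurable F)
    (hom : ∀ r x, 0 < r → F (r • x) = ENNReal.ofReal r * F x) :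
    ∫⁻ z, g ‖z‖ * F z ∂μ = (∫⁻ σ : sphere (0 : E) 1, F σ ∂μ.toSphere) *
      ∫⁻ r : Ioi (0 : ℝ), g r * ENNReal.ofReal r
        ∂(Measure.volumeIoiPow (Module.finrank ℝ E - 1)) := by
  rw [← lintegral_prod_mul (by fun_prop) (by fun_prop),
    ← (Measure.measurePreserving_homeomorphUnitSphereProd μ).lintegral_comp_emb
      (homeomorphUnitSphereProd _).measurableEmbedding,
    ← restrict_compl_singleton (μ := μ) 0,
    ← lintegral_subtype_comap (measurableSet_singleton _).compl, restrict_compl_singleton]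
  refine lintegral_congr fun x => ?_
  have hx : 0 < ‖(x : E)‖ := norm_pos_iff.2 x.2
  rw [homeomorphUnitSphereProd_apply_fst_coe, homeomorphUnitSphereProd_apply_snd_coe, mul_left_comm,
    mul_comm (F _), ← hom _ _ hx, smul_inv_smul₀ hx.ne']

theorem lintegral_radial_mul_homogeneous_mul_toSphere_univ [Nontrivial E] (μ : Measure E)
    [μ.IsAddHaarMeasure] {g : ℝ → ℝ≥0∞} (hg : Measurable g) {F : E → ℝ≥0∞} (hF : Measurable F)
    (hom : ∀ r x, 0 < r → F (r • x) = ENNReal.ofReal r * F x) :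
    (∫⁻ z, g ‖z‖ * F z ∂μ) * μ.toSphere univ =
      (∫⁻ σ : sphere (0 : E) 1, F σ ∂μ.toSphere) * ∫⁻ z, g ‖z‖ * ENNReal.ofReal ‖z‖ ∂μ := by
  rw [lintegral_radial_mul_homogeneous μ hg hF hom,
    lintegral_radial_mul_homogeneous μ hg (F := fun z => ENNReal.ofReal ‖z‖) (by fun_prop)
      fun r x hr => by rw [norm_smul, Real.norm_of_nonneg hr.le, ENNReal.ofReal_mul hr.le]]
  simp only [norm_eq_of_mem_sphere, ENNReal.ofReal_one, lintegral_const, one_mul]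
  ring

variable {n : ℕ}

theorem one_half_le_one_sub_rpow (hn : 0 < n) :
    1 / 2 ≤ (1 - 1 / (2 * n) : ℝ) ^ ((n : ℝ) / 2) := by
  have hn1 : (1 : ℝ) ≤ n := by exact_mod_cast hn
  have hinv : 1 / (2 * n : ℝ) ≤ 1 / 2 := one_div_le_one_div_of_le two_pos (by linarith)
  have hinv0 : 0 ≤ 1 / (2 * n : ℝ) := by positivity
  calc (1 / 2 : ℝ) = 1 + n * -(1 / (2 * n)) := by field_simp; ring
    _ ≤ (1 + -(1 / (2 * n))) ^ n := one_add_mul_le_pow (by linarith) n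
    _ = (1 - 1 / (2 * n) : ℝ) ^ (n : ℝ) := by rw [Real.rpow_natCast, sub_eq_add_neg]
    _ ≤ _ := Real.rpow_le_rpow_of_exponent_ge (by linarith) (by linarith) (by linarith)

theorem le_mul_exp_sq_div {a : ℝ} (ha : 0 < a) (r : ℝ) :
    r ≤ 4 * a * Real.exp (r ^ 2 / (8 * a ^ 2)) :=
  calc r ≤ 4 * a * (r ^ 2 / (8 * a ^ 2) + 1) := by
        rw [← sub_nonneg]
        have : 4 * a * (r ^ 2 / (8 * a ^ 2) + 1) - r = ((r - a) ^ 2 + 7 * a ^ 2) / (2 * a) := by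
          field_simp
          ring
        rw [this]
        positivity
    _ ≤ 4 * a * Real.exp (r ^ 2 / (8 * a ^ 2)) := by
        gcongr
        exact Real.add_one_le_exp _

/-- Slightly enlarging the time absorbs the factor `‖z‖`; the enlargement `1 / (1 - 1/(2n))` changes
the normalizing constant of the kernel by a bounded factor only. -/
theorem heatKernel_one_mul_norm_le (hn : 0 < n) (z : 𝔼 n) :
    heatKernel n 1 z * ‖z‖ ≤ 8 * √n * heatKernel n (1 - 1 / (2 * n : ℝ))⁻¹ z := by
  have hn1 : (1 : ℝ) ≤ n := by exact_mod_cast hn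
  have ha : 0 < 1 - 1 / (2 * n : ℝ) := by
    rw [sub_pos, div_lt_one (by positivity)]
    linarith
  have hconst := one_half_le_one_sub_rpow hn
  have hnorm := le_mul_exp_sq_div (Real.sqrt_pos.2 (by positivity : (0 : ℝ) < n)) ‖z‖
  rw [Real.sq_sqrt (by positivity)] at hnorm
  have hpow : (4 * Real.pi * (1 - 1 / (2 * n : ℝ))⁻¹) ^ (-(n : ℝ) / 2) =
      (4 * Real.pi) ^ (-(n : ℝ) / 2) * (1 - 1 / (2 * n : ℝ)) ^ ((n : ℝ) / 2) := by
    rw [Real.mul_rpow (by positivity) (by positivity), Real.inv_rpow ha.le, ← Real.rpow_neg ha.le,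
      neg_div, neg_neg]
  have hexp : Real.exp (-‖z‖ ^ 2 / (4 * (1 - 1 / (2 * n : ℝ))⁻¹)) =
      Real.exp (-‖z‖ ^ 2 / 4) * Real.exp (‖z‖ ^ 2 / (8 * n)) := by
    rw [← Real.exp_add]
    congr 1
    field_simp
    ring
  rw [heatKernel, heatKernel, hpow, hexp, mul_one, mul_one]
  calc (4 * Real.pi) ^ (-(n : ℝ) / 2) * Real.exp (-‖z‖ ^ 2 / 4) * ‖z‖
      ≤ (4 * Real.pi) ^ (-(n : ℝ) / 2) * Real.exp (-‖z‖ ^ 2 / 4) *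
        (4 * √n * Real.exp (‖z‖ ^ 2 / (8 * n))) := by gcongr
    _ = 8 * √n * ((4 * Real.pi) ^ (-(n : ℝ) / 2) * (1 / 2) *
        (Real.exp (-‖z‖ ^ 2 / 4) * Real.exp (‖z‖ ^ 2 / (8 * n)))) := by ring
    _ ≤ _ := by gcongr

theorem lintegral_norm_heatMeasure_one_le (hn : 0 < n) :
    ∫⁻ z, ENNReal.ofReal ‖z‖ ∂heatMeasure n 1 ≤ ENNReal.ofReal (8 * √n) := by
  set a : ℝ := (1 - 1 / (2 * n : ℝ))⁻¹
  have ha : 0 < a := by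
    have hn1 : (1 : ℝ) ≤ n := by exact_mod_cast hn
    rw [inv_pos, sub_pos, div_lt_one (by positivity)]
    linarith
  have := isProbabilityMeasure_heatMeasure n ha
  calc ∫⁻ z, ENNReal.ofReal ‖z‖ ∂heatMeasure n 1
      = ∫⁻ z, ENNReal.ofReal (heatKernel n 1 z) * ENNReal.ofReal ‖z‖ :=
        lintegral_heatMeasure n 1 (by fun_prop)
    _ ≤ ∫⁻ z, ENNReal.ofReal (heatKernel n a z) * ENNReal.ofReal (8 * √n) := by
        refine lintegral_mono fun z => ?_
        rw [← ENNReal.ofReal_mul (heatKernel_nonneg n one_pos z),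
          ← ENNReal.ofReal_mul (heatKernel_nonneg n ha z), mul_comm (heatKernel n a z)]
        exact ENNReal.ofReal_le_ofReal (heatKernel_one_mul_norm_le hn z)
    _ = ∫⁻ _, ENNReal.ofReal (8 * √n) ∂heatMeasure n a :=
        (lintegral_heatMeasure n a measurable_const).symm
    _ = ENNReal.ofReal (8 * √n) := by simp

namespace IsNorm

variable {N : 𝔼 n → ℝ}

theorem integrable_toSphere (hN : IsNorm N) :
    Integrable (fun σ : sphere (0 : 𝔼 n) 1 => N σ) (volume : Measure (𝔼 n)).toSphere :=
  (hN.continuous.comp continuous_subtype_val).integrable_of_hasCompactSupport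
    (.of_compactSpace _)

theorem ofReal_MX_mul_toSphere_univ (hN : IsNorm N) :
    ENNReal.ofReal (MX N) * (volume : Measure (𝔼 n)).toSphere univ =
      ∫⁻ σ : sphere (0 : 𝔼 n) 1, ENNReal.ofReal (N σ) ∂(volume : Measure (𝔼 n)).toSphere := by
  rw [← ofReal_integral_eq_lintegral_ofReal hN.integrable_toSphere
      (.of_forall fun σ => hN.nonneg _),
    ← measure_smul_average, smul_eq_mul, ENNReal.ofReal_mul (by positivity), ofReal_measureReal,
    mul_comm, MX]

theorem MX_pos (hN : IsNorm N) (hn : 0 < n) : 0 < MX N := by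
  have : Nonempty (Fin n) := ⟨⟨0, hn⟩⟩
  have : NeZero (volume : Measure (𝔼 n)).toSphere := ⟨Measure.toSphere_ne_zero _⟩
  obtain ⟨c, hc, hcN⟩ := hN.exists_mul_norm_le
  refine hc.trans_le ?_
  calc c = ⨍ _ : sphere (0 : 𝔼 n) 1, c ∂(volume : Measure (𝔼 n)).toSphere :=
        (average_const _ c).symm
    _ ≤ MX N := by
        rw [MX, average_eq, average_eq]
        refine smul_le_smul_of_nonneg_left
          (integral_mono (integrable_const c) hN.integrable_toSphere fun σ => ?_) (by positivity)
        simpa using hcN σ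

theorem lintegral_heatMeasure_one_le (hN : IsNorm N) (hn : 0 < n) :
    ∫⁻ z, ENNReal.ofReal (N z) ∂heatMeasure n 1 ≤ ENNReal.ofReal (8 * √n * MX N) := by
  have : Nonempty (Fin n) := ⟨⟨0, hn⟩⟩
  have hsphere : (volume : Measure (𝔼 n)).toSphere univ ≠ 0 := by
    rw [Ne, Measure.measure_univ_eq_zero]
    exact Measure.toSphere_ne_zero _
  have hNm := hN.continuous.measurable.ennreal_ofReal
  let g (r : ℝ) := ENNReal.ofReal ((4 * Real.pi * 1) ^ (-(n : ℝ) / 2) * Real.exp (-r ^ 2 / (4 * 1)))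
  have hpolar := lintegral_radial_mul_homogeneous_mul_toSphere_univ (volume : Measure (𝔼 n))
    (g := g) (by fun_prop) hNm fun r x hr => by
      rw [hN.map_smul_of_nonneg hr.le, ENNReal.ofReal_mul hr.le]
  rw [← hN.ofReal_MX_mul_toSphere_univ, mul_right_comm] at hpolar
  calc ∫⁻ z, ENNReal.ofReal (N z) ∂heatMeasure n 1
      = ∫⁻ z : 𝔼 n, g ‖z‖ * ENNReal.ofReal (N z) := lintegral_heatMeasure n 1 hNm
    _ = ENNReal.ofReal (MX N) * ∫⁻ z : 𝔼 n, g ‖z‖ * ENNReal.ofReal ‖z‖ :=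
        (ENNReal.mul_left_inj hsphere (measure_ne_top _ _)).1 hpolar
    _ = ENNReal.ofReal (MX N) * ∫⁻ z, ENNReal.ofReal ‖z‖ ∂heatMeasure n 1 := by
        rw [lintegral_heatMeasure n 1 (by fun_prop)]
        rfl
    _ ≤ ENNReal.ofReal (MX N) * ENNReal.ofReal (8 * √n) := by
        gcongr
        exact lintegral_norm_heatMeasure_one_le hn
    _ = ENNReal.ofReal (8 * √n * MX N) := by
        rw [← ENNReal.ofReal_mul (hN.MX_pos hn).le, mul_comm]

end IsNorm

end Moments

/-! ### Regularity of the heat semigroup in time -/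

section TimeRegularity

theorem sqrt_add_sub_sqrt_le {u v : ℝ} (hu : 0 < u) (hv : 0 ≤ v) :
    √(u + v) - √u ≤ v / (2 * √u) := by
  have : 0 < √u := Real.sqrt_pos.2 hu
  rw [sub_le_iff_le_add, Real.sqrt_le_left (by positivity)]
  calc u + v ≤ u + v + (v / (2 * √u)) ^ 2 := le_add_of_nonneg_right (sq_nonneg _)
    _ = (v / (2 * √u) + √u) ^ 2 := by
        rw [add_sq, Real.sq_sqrt hu.le]
        field_simp
        ring

variable {n : ℕ} {Y : Type*} [NormedAddCommGroup Y]

theorem integrable_comp_sub_smul_heatMeasure_one {φ : 𝔼 n → Y} {C : ℝ} (hφ : StronglyMeasurable φ)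
    (hC : ∀ x, ‖φ x‖ ≤ C) (x : 𝔼 n) (a : ℝ) :
    Integrable (fun z => φ (x - a • z)) (heatMeasure n 1) := by
  have := isProbabilityMeasure_heatMeasure n one_pos
  exact .of_bound (hφ.comp_measurable (by fun_prop)).aestronglyMeasurable C
    (.of_forall fun _ => hC _)

variable [NormedSpace ℝ Y]

theorem heat_sub_heat_eq_integral {φ : 𝔼 n → Y} {C : ℝ} (hφ : StronglyMeasurable φ)
    (hC : ∀ x, ‖φ x‖ ≤ C) {u v : ℝ} (hu : 0 < u) (hv : 0 < v) (x : 𝔼 n) :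
    heat u φ x - heat v φ x = ∫ z, (φ (x - √u • z) - φ (x - √v • z)) ∂heatMeasure n 1 := by
  rw [integral_sub (integrable_comp_sub_smul_heatMeasure_one hφ hC _ _)
    (integrable_comp_sub_smul_heatMeasure_one hφ hC _ _), heat_eq_integral_sqrt_smul hφ hu,
    heat_eq_integral_sqrt_smul hφ hv]

theorem sub_heat_eq_integral [CompleteSpace Y] {φ : 𝔼 n → Y} {C : ℝ} (hφ : StronglyMeasurable φ)
    (hC : ∀ x, ‖φ x‖ ≤ C) {u : ℝ} (hu : 0 < u) (x : 𝔼 n) :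
    φ x - heat u φ x = ∫ z, (φ (x - (0 : ℝ) • z) - φ (x - √u • z)) ∂heatMeasure n 1 := by
  have := isProbabilityMeasure_heatMeasure n one_pos
  rw [integral_sub (integrable_comp_sub_smul_heatMeasure_one hφ hC _ _)
    (integrable_comp_sub_smul_heatMeasure_one hφ hC _ _), heat_eq_integral_sqrt_smul hφ hu]
  simp

/-- The Littlewood–Paley piece `(H_u - H_{3u}) f` of `f` at scale `√u`. -/
def heatGap (f : 𝔼 n → Y) (u : ℝ) (x : 𝔼 n) : Y :=
  heat u f x - heat (3 * u) f x

namespace CompactLip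

variable {N : 𝔼 n → ℝ} {L : ℝ} {f : 𝔼 n → Y}

theorem norm_integral_comp_sub_smul_sub_le (hf : CompactLip N L f) (hn : 0 < n) (x : 𝔼 n)
    (a b : ℝ) : ‖∫ z, (f (x - a • z) - f (x - b • z)) ∂heatMeasure n 1‖ ≤
      L * |a - b| * (8 * √n * MX N) := by
  have hM := (hf.isNorm.MX_pos hn).le
  have hL : 0 ≤ L * |a - b| := mul_nonneg hf.nonneg (abs_nonneg _)
  rw [← ENNReal.ofReal_le_ofReal_iff (by positivity), ofReal_norm, ENNReal.ofReal_mul hL]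
  calc ‖∫ z, (f (x - a • z) - f (x - b • z)) ∂heatMeasure n 1‖ₑ
      ≤ ∫⁻ z, ‖f (x - a • z) - f (x - b • z)‖ₑ ∂heatMeasure n 1 :=
        enorm_integral_le_lintegral_enorm _
    _ ≤ ∫⁻ z, ENNReal.ofReal (L * |a - b|) * ENNReal.ofReal (N z) ∂heatMeasure n 1 := by
        refine lintegral_mono fun z => ?_
        rw [← ofReal_norm, ← ENNReal.ofReal_mul hL]
        refine ENNReal.ofReal_le_ofReal ((hf.norm_sub_le _ _).trans_eq ?_)
        rw [_root_.sub_sub_sub_cancel_left, ← sub_smul, hf.isNorm.2.1, abs_sub_comm, mul_assoc]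
    _ ≤ ENNReal.ofReal (L * |a - b|) * ENNReal.ofReal (8 * √n * MX N) := by
        rw [lintegral_const_mul _ hf.isNorm.continuous.measurable.ennreal_ofReal]
        gcongr
        exact hf.isNorm.lintegral_heatMeasure_one_le hn

theorem norm_heat_sub_heat_add_le (hf : CompactLip N L f) (hn : 0 < n) {u v : ℝ} (hu : 0 < u)
    (hv : 0 ≤ v) (x : 𝔼 n) :
    ‖heat u f x - heat (u + v) f x‖ ≤ L * (v / (2 * √u)) * (8 * √n * MX N) := by
  obtain ⟨C, hC⟩ := hf.exists_norm_le
  have hM := (hf.isNorm.MX_pos hn).le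
  have hL := hf.nonneg
  rw [heat_sub_heat_eq_integral hf.stronglyMeasurable hC hu (by positivity)]
  refine (hf.norm_integral_comp_sub_smul_sub_le hn x _ _).trans ?_
  rw [abs_sub_comm, abs_of_nonneg (sub_nonneg.2 (Real.sqrt_le_sqrt (by linarith)))]
  gcongr
  exact sqrt_add_sub_sqrt_le hu hv

theorem norm_sub_heat_le [CompleteSpace Y] (hf : CompactLip N L f) (hn : 0 < n) {u : ℝ} (hu : 0 < u)
    (x : 𝔼 n) : ‖f x - heat u f x‖ ≤ L * √u * (8 * √n * MX N) := by
  obtain ⟨C, hC⟩ := hf.exists_norm_le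
  rw [sub_heat_eq_integral hf.stronglyMeasurable hC hu]
  simpa [abs_of_nonneg] using hf.norm_integral_comp_sub_smul_sub_le hn x 0 (√u)

theorem stronglyMeasurable_heatGap (hf : CompactLip N L f) (u : ℝ) :
    StronglyMeasurable (heatGap f u) :=
  (stronglyMeasurable_heat measurable_const measurable_id hf.stronglyMeasurable).sub
    (stronglyMeasurable_heat measurable_const measurable_id hf.stronglyMeasurable)

theorem exists_norm_heatGap_le (hf : CompactLip N L f) {u : ℝ} (hu : 0 < u) :
    ∃ C, ∀ x, ‖heatGap f u x‖ ≤ C := by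
  obtain ⟨C, hC⟩ := hf.exists_norm_le
  exact ⟨C + C, fun x =>
    norm_sub_le_of_le (norm_heat_le hC hu x) (norm_heat_le hC (by positivity) x)⟩

theorem heat_heatGap (hf : CompactLip N L f) {s u : ℝ} (hs : 0 < s) (hu : 0 < u) (x : 𝔼 n) :
    heat s (heatGap f u) x = heat (s + u) f x - heat (s + 3 * u) f x := by
  obtain ⟨C, hC⟩ := hf.exists_norm_le
  have hmeas (a : ℝ) : StronglyMeasurable (heat a f) :=
    stronglyMeasurable_heat measurable_const measurable_id hf.stronglyMeasurable
  have hu3 : 0 < 3 * u := by positivity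
  rw [← heat_heat hf.stronglyMeasurable hC hs hu, ← heat_heat hf.stronglyMeasurable hC hs hu3]
  exact heat_sub (hmeas u) (norm_heat_le hC hu) (hmeas _) (norm_heat_le hC hu3) hs x

theorem enorm_heat_sub_heat_two_mul_le (hf : CompactLip N L f) (hn : 0 < n) {v : ℝ} (hv : 0 < v)
    (x : 𝔼 n) : ‖heat v f x - heat (2 * v) f x‖ₑ ≤ ∑' k : ℕ,
      ‖heat (2 ^ k * (v / 2)) (heatGap f (2 ^ k * (v / 2))) x -
        heat (2 ^ k * (v / 2) + v) (heatGap f (2 ^ k * (v / 2))) x‖ₑ := by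
  have hlim : Filter.Tendsto (fun k : ℕ => heat (2 ^ k * v) f x - heat (2 ^ k * v + v) f x)
      .atTop (nhds 0) := by
    refine squeeze_zero_norm (fun k => ?_)
      (tendsto_div_sqrt_two_pow_mul hv (L * (v / 2) * (8 * √n * MX N)))
    refine (hf.norm_heat_sub_heat_add_le hn (by positivity) hv.le x).trans_eq ?_
    field_simp
  have htel := enorm_le_tsum_enorm_sub_succ hlim
  rw [pow_zero, one_mul, ← two_mul] at htel
  refine htel.trans_eq (tsum_congr fun k => ?_)
  have hu : 0 < 2 ^ k * (v / 2) := by positivity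
  rw [hf.heat_heatGap hu hu, hf.heat_heatGap (by positivity) hu,
    show 2 ^ k * (v / 2) + 2 ^ k * (v / 2) = 2 ^ k * v by ring,
    show 2 ^ k * (v / 2) + 3 * (2 ^ k * (v / 2)) = 2 ^ (k + 1) * v by ring,
    show 2 ^ k * (v / 2) + v + 2 ^ k * (v / 2) = 2 ^ k * v + v by ring,
    show 2 ^ k * (v / 2) + v + 3 * (2 ^ k * (v / 2)) = 2 ^ (k + 1) * v + v by ring]
  congr 1
  abel

theorem measurable_heatDerivGap_mul_exp (hf : CompactLip N L f) (q : ℝ) {c : ℝ} (hc : 0 < c) :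
    Measurable fun p : ℝ × 𝔼 n => heatDerivGap q f p.2 (c * Real.exp (2 * p.1)) :=
  hf.measurable_heatDerivGap q (by fun_prop) (fun p => by positivity) measurable_snd

variable [CompleteSpace Y]

theorem enorm_heatGap_add_smul_sub_le (hf : CompactLip N L f) {u : ℝ} (hu : 0 < u) (x z : 𝔼 n)
    {δ : ℝ} (hδ : 0 ≤ δ) : ‖heatGap f u (x + δ • z) - heatGap f u x‖ₑ ≤
      ∫⁻ r in Ioc 0 δ, ‖heatDeriv f z u (x + r • z) - heatDeriv f z (3 * u) (x + r • z)‖ₑ := by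
  have hu3 : 0 < 3 * u := by positivity
  have hcont {s : ℝ} (hs : 0 < s) : Continuous fun r : ℝ => heatDeriv f z s (x + r • z) :=
    (hf.continuous_heatDeriv z hs).comp (by fun_prop)
  have heq : heatGap f u (x + δ • z) - heatGap f u x =
      ∫ r in (0 : ℝ)..δ, (heatDeriv f z u (x + r • z) - heatDeriv f z (3 * u) (x + r • z)) := by
    rw [intervalIntegral.integral_sub ((hcont hu).intervalIntegrable _ _)
      ((hcont hu3).intervalIntegrable _ _), ← hf.heat_add_smul_sub_heat z x hu,
      ← hf.heat_add_smul_sub_heat z x hu3, heatGap, heatGap]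
    abel
  rw [heq, intervalIntegral.integral_of_le hδ]
  exact enorm_integral_le_lintegral_enorm _

theorem enorm_heat_heatGap_sub_le (hf : CompactLip N L f) {u v : ℝ} (hu : 0 < u) (hv : 0 ≤ v)
    (x : 𝔼 n) : ‖heat u (heatGap f u) x - heat (u + v) (heatGap f u) x‖ₑ ≤
      ∫⁻ z, (∫⁻ r in Ioc 0 (√(u + v) - √u), ‖heatDeriv f z u (x - (√(u + v) - r) • z) -
        heatDeriv f z (3 * u) (x - (√(u + v) - r) • z)‖ₑ) ∂heatMeasure n 1 := by
  obtain ⟨C, hC⟩ := hf.exists_norm_heatGap_le hu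
  rw [heat_sub_heat_eq_integral (hf.stronglyMeasurable_heatGap u) hC hu (by positivity)]
  refine (enorm_integral_le_lintegral_enorm _).trans (lintegral_mono fun z => ?_)
  have hshift (r : ℝ) : x - (√(u + v) - r) • z = x - √(u + v) • z + r • z := by
    rw [sub_smul]
    abel
  have hle : √u ≤ √(u + v) := Real.sqrt_le_sqrt (by linarith)
  have hftc := hf.enorm_heatGap_add_smul_sub_le hu (x - √(u + v) • z) z (sub_nonneg.2 hle)
  simp only [← hshift, _root_.sub_sub_cancel] at hftc
  exact hftc

theorem eLpNorm'_heat_heatGap_sub_le (hf : CompactLip N L f) {q : ℝ} (hq : 1 ≤ q) {u v : ℝ}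
    (hu : 0 < u) (hv : 0 ≤ v) :
    eLpNorm' (fun x => heat u (heatGap f u) x - heat (u + v) (heatGap f u) x) q volume ≤
      ENNReal.ofReal (v / (2 * √u)) * ∫⁻ z, heatDerivGap q f z u ∂heatMeasure n 1 := by
  set δ := √(u + v) - √u
  let T (p : 𝔼 n × ℝ) (x : 𝔼 n) : ℝ≥0∞ := ‖heatDeriv f p.1 u (x - (√(u + v) - p.2) • p.1) -
    heatDeriv f p.1 (3 * u) (x - (√(u + v) - p.2) • p.1)‖ₑ
  have hT : Measurable (Function.uncurry T) :=
    (hf.stronglyMeasurable_heatDeriv_sub (P := (𝔼 n × ℝ) × 𝔼 n) (a := fun _ => u)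
      (b := fun p => p.2 - (√(u + v) - p.1.2) • p.1.1) (c := fun p => p.1.1) measurable_const
      (fun _ => hu) (by fun_prop) (by fun_prop)).enorm
  have hgap : Measurable fun z => heatDerivGap q f z u :=
    hf.measurable_heatDerivGap q measurable_const (fun _ => hu) measurable_id
  have hgap_fst : Measurable fun p : 𝔼 n × ℝ => heatDerivGap q f p.1 u := hgap.comp measurable_fst
  calc eLpNorm' (fun x => heat u (heatGap f u) x - heat (u + v) (heatGap f u) x) q volume
      ≤ eLpNorm' (fun x => ∫⁻ p, T p x ∂(heatMeasure n 1).prod (volume.restrict (Ioc 0 δ))) q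
          volume := by
        refine eLpNorm'_le_of_enorm_le _ (by linarith) fun x => ?_
        rw [lintegral_prod _ hT.of_uncurry_right.aemeasurable]
        exact hf.enorm_heat_heatGap_sub_le hu hv x
    _ ≤ ∫⁻ p, eLpNorm' (T p) q volume ∂(heatMeasure n 1).prod (volume.restrict (Ioc 0 δ)) :=
        eLpNorm'_lintegral_le _ _ hq hT
    _ = ∫⁻ p, heatDerivGap q f p.1 u ∂(heatMeasure n 1).prod (volume.restrict (Ioc 0 δ)) := by
        refine lintegral_congr fun p => ?_
        rw [eLpNorm'_enorm]
        exact eLpNorm'_comp_sub_right volume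
          (fun x => heatDeriv f p.1 u x - heatDeriv f p.1 (3 * u) x) q _
    _ = ENNReal.ofReal δ * ∫⁻ z, heatDerivGap q f z u ∂heatMeasure n 1 := by
        rw [lintegral_prod _ hgap_fst.aemeasurable]
        simp only [lintegral_const, Measure.restrict_apply_univ, Real.volume_Ioc, sub_zero]
        rw [lintegral_mul_const _ hgap, mul_comm]
    _ ≤ ENNReal.ofReal (v / (2 * √u)) * ∫⁻ z, heatDerivGap q f z u ∂heatMeasure n 1 := by
        gcongr
        exact sqrt_add_sub_sqrt_le hu hv

theorem eLpNorm'_heat_sub_heat_two_mul_le (hf : CompactLip N L f) (hn : 0 < n) {q : ℝ}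
    (hq : 1 ≤ q) {v : ℝ} (hv : 0 < v) :
    eLpNorm' (fun x => heat v f x - heat (2 * v) f x) q volume ≤ ∑' k : ℕ,
      ENNReal.ofReal (√v / √(2 ^ k)) *
        ∫⁻ z, heatDerivGap q f z (2 ^ k * (v / 2)) ∂heatMeasure n 1 := by
  refine (eLpNorm'_le_of_enorm_le _ (by linarith)
    (hf.enorm_heat_sub_heat_two_mul_le hn hv)).trans ?_
  refine (eLpNorm'_tsum_le _ hq fun k => ?_).trans (ENNReal.tsum_le_tsum fun k => ?_)
  · have hgap := hf.stronglyMeasurable_heatGap (2 ^ k * (v / 2))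
    exact ((stronglyMeasurable_heat measurable_const measurable_id hgap).sub
      (stronglyMeasurable_heat measurable_const measurable_id hgap)).enorm
  · rw [eLpNorm'_enorm]
    refine (hf.eLpNorm'_heat_heatGap_sub_le hq (by positivity) hv.le).trans ?_
    refine mul_le_mul_left (ENNReal.ofReal_le_ofReal ?_) _
    have : 0 < √(v / 2) := Real.sqrt_pos.2 (half_pos hv)
    rw [Real.sqrt_mul (by positivity)]
    calc v / (2 * (√(2 ^ k) * √(v / 2))) = v / 2 / √(v / 2) / √(2 ^ k) := by field_simp
      _ = √(v / 2) / √(2 ^ k) := by rw [Real.div_sqrt]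
      _ ≤ √v / √(2 ^ k) := by
          gcongr
          linarith

theorem eLpNorm'_lintegral_heatDerivGap_le (hf : CompactLip N L f) (hn : 0 < n) {q m : ℝ}
    (hq : 1 ≤ q) (hY : MartCotypeBound q Y m) {c : ℝ} (hc : 0 < c) :
    eLpNorm' (fun y : ℝ => ∫⁻ z, heatDerivGap q f z (c * Real.exp (2 * y)) ∂heatMeasure n 1) q
        volume ≤ squareFunctionBound q m L f * ENNReal.ofReal (8 * √n * MX N) := by
  have hmeas : Measurable fun p : 𝔼 n × ℝ => heatDerivGap q f p.1 (c * Real.exp (2 * p.2)) :=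
    hf.measurable_heatDerivGap q (by fun_prop) (fun _ => by positivity) measurable_fst
  refine (eLpNorm'_lintegral_le (heatMeasure n 1) volume hq hmeas).trans ?_
  refine (lintegral_mono fun z => hf.eLpNorm'_heatDerivGap_mul_exp_le hq hY z hc).trans ?_
  rw [lintegral_const_mul _ hf.isNorm.continuous.measurable.ennreal_ofReal]
  gcongr
  exact hf.isNorm.lintegral_heatMeasure_one_le hn

theorem eLpNorm'_exp_neg_mul_heat_sub_heat_two_mul_le (hf : CompactLip N L f) (hn : 0 < n)
    {q m : ℝ} (hq : 1 ≤ q) (hY : MartCotypeBound q Y m) {c : ℝ} (hc : 0 < c) :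
    eLpNorm' (fun y : ℝ => ENNReal.ofReal (Real.exp (-y)) * eLpNorm' (fun x =>
        heat (c * Real.exp (2 * y)) f x - heat (2 * (c * Real.exp (2 * y))) f x) q volume) q
        volume ≤
      ENNReal.ofReal (4 * √c) *
        (squareFunctionBound q m L f * ENNReal.ofReal (8 * √n * MX N)) := by
  have hy (y : ℝ) : ENNReal.ofReal (Real.exp (-y)) * eLpNorm' (fun x =>
      heat (c * Real.exp (2 * y)) f x - heat (2 * (c * Real.exp (2 * y))) f x) q volume ≤
      ∑' k : ℕ, ENNReal.ofReal (√c / √(2 ^ k)) *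
        ∫⁻ z, heatDerivGap q f z (2 ^ k * (c / 2) * Real.exp (2 * y)) ∂heatMeasure n 1 := by
    refine (mul_le_mul_right
      (hf.eLpNorm'_heat_sub_heat_two_mul_le hn hq (by positivity)) _).trans_eq ?_
    rw [← ENNReal.tsum_mul_left]
    refine tsum_congr fun k => ?_
    rw [← mul_assoc, ← ENNReal.ofReal_mul (Real.exp_pos _).le, sqrt_mul_exp_two_mul hc.le]
    congr 2
    · rw [Real.exp_neg]
      field_simp
    · simp only [mul_div_right_comm, mul_assoc]
  refine (eLpNorm'_le_of_enorm_le _ (by linarith) hy).trans ?_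
  refine (eLpNorm'_tsum_mul_le _ hq _
    (fun k => (hf.measurable_heatDerivGap_mul_exp q (by positivity)).lintegral_prod_right')
    (fun k => hf.eLpNorm'_lintegral_heatDerivGap_le hn hq hY (by positivity))).trans ?_
  gcongr
  exact tsum_ofReal_div_sqrt_two_pow_le (Real.sqrt_nonneg c)

theorem enorm_sub_heat_le (hf : CompactLip N L f) (hn : 0 < n) {s : ℝ} (hs : 0 < s) (x : 𝔼 n) :
    ‖f x - heat s f x‖ₑ ≤
      ∑' k : ℕ, ‖heat (s / 2 ^ (k + 1)) f x - heat (2 * (s / 2 ^ (k + 1))) f x‖ₑ := by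
  have hlim : Filter.Tendsto (fun k : ℕ => f x - heat (s / 2 ^ k) f x) .atTop (nhds 0) := by
    refine squeeze_zero_norm (fun k => hf.norm_sub_heat_le hn (by positivity) x) ?_
    have hscale : Filter.Tendsto (fun k : ℕ => √(s / 2 ^ k)) .atTop (nhds 0) := by
      simpa [Real.sqrt_div hs.le] using tendsto_div_sqrt_two_pow_mul one_pos (√s)
    simpa using (hscale.const_mul L).mul_const (8 * √n * MX N)
  have htel := enorm_le_tsum_enorm_sub_succ hlim
  rw [pow_zero, div_one] at htel
  refine htel.trans_eq (tsum_congr fun k => ?_)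
  rw [_root_.sub_sub_sub_cancel_left,
    show 2 * (s / 2 ^ (k + 1)) = s / 2 ^ k by rw [pow_succ]; field_simp]

theorem eLpNorm'_sub_heat_le (hf : CompactLip N L f) (hn : 0 < n) {q : ℝ} (hq : 1 ≤ q) {s : ℝ}
    (hs : 0 < s) : eLpNorm' (fun x => f x - heat s f x) q volume ≤ ∑' k : ℕ,
      eLpNorm' (fun x => heat (s / 2 ^ (k + 1)) f x - heat (2 * (s / 2 ^ (k + 1))) f x) q
        volume := by
  refine (eLpNorm'_le_of_enorm_le _ (by linarith) (hf.enorm_sub_heat_le hn hs)).trans ?_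
  have hmeas (a : ℝ) : StronglyMeasurable (heat a f) :=
    stronglyMeasurable_heat measurable_const measurable_id hf.stronglyMeasurable
  refine (eLpNorm'_tsum_le volume hq fun k => ((hmeas _).sub (hmeas _)).enorm).trans_eq ?_
  exact tsum_congr fun k => eLpNorm'_enorm

theorem eLpNorm'_exp_neg_mul_sub_heat_le (hf : CompactLip N L f) (hn : 0 < n) {q m : ℝ}
    (hq : 1 ≤ q) (hY : MartCotypeBound q Y m) {γ : ℝ} (hγ : 0 < γ) :
    eLpNorm' (fun y : ℝ => ENNReal.ofReal (Real.exp (-y)) *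
        eLpNorm' (fun x => f x - heat (γ * Real.exp (2 * y)) f x) q volume) q volume ≤
      ENNReal.ofReal (16 * √γ) *
        (squareFunctionBound q m L f * ENNReal.ofReal (8 * √n * MX N)) := by
  let T (k : ℕ) (y : ℝ) : ℝ≥0∞ := ENNReal.ofReal (Real.exp (-y)) * eLpNorm' (fun x =>
    heat (γ / 2 ^ (k + 1) * Real.exp (2 * y)) f x -
      heat (2 * (γ / 2 ^ (k + 1) * Real.exp (2 * y))) f x) q volume
  have hT (k : ℕ) : Measurable (T k) := by
    refine Measurable.mul (by fun_prop) (measurable_eLpNorm' volume q ?_)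
    exact ((stronglyMeasurable_heat (by fun_prop) measurable_snd hf.stronglyMeasurable).sub
      (stronglyMeasurable_heat (by fun_prop) measurable_snd hf.stronglyMeasurable)).enorm
  have hy (y : ℝ) : ENNReal.ofReal (Real.exp (-y)) *
      eLpNorm' (fun x => f x - heat (γ * Real.exp (2 * y)) f x) q volume ≤ ∑' k, T k y := by
    rw [ENNReal.tsum_mul_left]
    simpa only [div_mul_eq_mul_div] using
      mul_le_mul_right (hf.eLpNorm'_sub_heat_le hn hq (s := γ * Real.exp (2 * y)) (by positivity)) _
  calc eLpNorm' (fun y : ℝ => ENNReal.ofReal (Real.exp (-y)) *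
        eLpNorm' (fun x => f x - heat (γ * Real.exp (2 * y)) f x) q volume) q volume
      ≤ eLpNorm' (fun y => ∑' k, T k y) q volume := eLpNorm'_le_of_enorm_le _ (by linarith) hy
    _ ≤ ∑' k, eLpNorm' (T k) q volume := eLpNorm'_tsum_le _ hq hT
    _ ≤ ∑' k : ℕ, ENNReal.ofReal (4 * √γ / √(2 ^ k)) *
          (squareFunctionBound q m L f * ENNReal.ofReal (8 * √n * MX N)) := by
        refine ENNReal.tsum_le_tsum fun k => (hf.eLpNorm'_exp_neg_mul_heat_sub_heat_two_mul_le hn hq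
          hY (by positivity)).trans (mul_le_mul_left (ENNReal.ofReal_le_ofReal ?_) _)
        rw [Real.sqrt_div hγ.le, mul_div_assoc]
        gcongr <;> norm_num
    _ ≤ ENNReal.ofReal (16 * √γ) *
          (squareFunctionBound q m L f * ENNReal.ofReal (8 * √n * MX N)) := by
        rw [ENNReal.tsum_mul_right]
        gcongr
        refine (tsum_ofReal_div_sqrt_two_pow_le (by positivity)).trans_eq ?_
        ring_nf

end CompactLip

end TimeRegularity

/-! ### Averages over balls and logarithmic scales -/

section Averages

theorem map_add_smul_eq_smul {E : Type*} [NormedAddCommGroup E] [NormedSpace ℝ E]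
    [FiniteDimensional ℝ E] [MeasurableSpace E] [BorelSpace E] (μ : Measure E)
    [μ.IsAddHaarMeasure] {t : ℝ} (ht : t ≠ 0) (x : E) :
    μ.map (fun w => x + t • w) = ENNReal.ofReal |(t ^ Module.finrank ℝ E)⁻¹| • μ := by
  have hcomp : (fun w : E => x + t • w) = (x + ·) ∘ (t • ·) := rfl
  rw [hcomp, ← Measure.map_map (by fun_prop) (by fun_prop), Measure.map_addHaar_smul μ ht,
    Measure.map_smul, map_add_left_eq_self]

theorem setLAverage_preimage_add_smul {E : Type*} [NormedAddCommGroup E] [NormedSpace ℝ E]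
    [FiniteDimensional ℝ E] [MeasurableSpace E] [BorelSpace E] (μ : Measure E)
    [μ.IsAddHaarMeasure] {t : ℝ} (ht : t ≠ 0) (x : E) (s : Set E) (g : E → ℝ≥0∞) :
    ⨍⁻ w in (fun w => x + t • w) ⁻¹' s, g (x + t • w) ∂μ = ⨍⁻ y in s, g y ∂μ := by
  have hemb : MeasurableEmbedding fun w : E => x + t • w :=
    ((Homeomorph.smulOfNeZero t ht).trans (Homeomorph.addLeft x)).measurableEmbedding
  have hc : ENNReal.ofReal |(t ^ Module.finrank ℝ E)⁻¹| ≠ 0 := by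
    rw [Ne, ENNReal.ofReal_eq_zero, not_le]
    positivity
  rw [setLAverage_eq, setLAverage_eq, ← hemb.map_apply, ← hemb.lintegral_map, ← hemb.restrict_map,
    map_add_smul_eq_smul μ ht, Measure.restrict_smul, lintegral_smul_measure, Measure.smul_apply,
    smul_eq_mul, smul_eq_mul, ENNReal.mul_div_mul_left _ _ hc ENNReal.ofReal_ne_top]

variable {n : ℕ} {N : 𝔼 n → ℝ}

/-- The uniform probability measure on the unit ball of the norm `N`. -/
def unitBallMeasure (N : 𝔼 n → ℝ) : Measure (𝔼 n) :=
  ProbabilityTheory.cond volume {x | N x ≤ 1}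

theorem lintegral_unitBallMeasure (N : 𝔼 n → ℝ) (g : 𝔼 n → ℝ≥0∞) :
    ∫⁻ w, g w ∂unitBallMeasure N = ⨍⁻ w in {x | N x ≤ 1}, g w ∂volume :=
  (setLAverage_eq' _ g _).symm

namespace IsNorm

theorem isProbabilityMeasure_unitBallMeasure (hN : IsNorm N) :
    IsProbabilityMeasure (unitBallMeasure N) :=
  ProbabilityTheory.cond_isProbabilityMeasure_of_finite (hN.measure_le_one_pos volume).ne'
    hN.isCompact_le_one.measure_ne_top

theorem ae_unitBallMeasure_le_one (hN : IsNorm N) : ∀ᵐ w ∂unitBallMeasure N, N w ≤ 1 :=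
  ProbabilityTheory.ae_cond_mem hN.isCompact_le_one.measurableSet

theorem lintegral_unitBallMeasure_add_smul (hN : IsNorm N) {t : ℝ} (ht : 0 < t) (x : 𝔼 n)
    (g : 𝔼 n → ℝ≥0∞) : ∫⁻ w, g (x + t • w) ∂unitBallMeasure N =
      (∫⁻ y in {y | N (y - x) ≤ t}, g y) / volume {y | N (y - x) ≤ t} := by
  have hball : {w | N w ≤ 1} = (fun w => x + t • w) ⁻¹' {y | N (y - x) ≤ t} := by
    ext w
    rw [mem_preimage, mem_ofPred_eq, mem_ofPred_eq, add_sub_cancel_left,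
      hN.map_smul_of_nonneg ht.le, mul_le_iff_le_one_right ht]
  rw [lintegral_unitBallMeasure, hball, setLAverage_preimage_add_smul volume ht.ne' x _ g,
    setLAverage_eq]

theorem eLpNorm'_norm_unitBallMeasure (hN : IsNorm N) {q : ℝ} (hq : 0 ≤ q) :
    eLpNorm' (fun w => ENNReal.ofReal ‖w‖) q (unitBallMeasure N) = ENNReal.ofReal (IqX q N) := by
  have hint : IntegrableOn (fun x : 𝔼 n => ‖x‖ ^ q) {x | N x ≤ 1} :=
    (continuous_norm.rpow_const fun _ => .inr hq).continuousOn.integrableOn_compact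
      hN.isCompact_le_one
  have havg : 0 ≤ ⨍ x in {x : 𝔼 n | N x ≤ 1}, ‖x‖ ^ q :=
    integral_nonneg fun x => by positivity
  rw [IqX, ← ENNReal.ofReal_rpow_of_nonneg havg (by positivity), ofReal_setAverage hint
    (.of_forall fun x => by positivity), eLpNorm'_eq_lintegral_enorm, lintegral_unitBallMeasure,
    setLAverage_eq]
  simp only [enorm_eq_self, ENNReal.ofReal_rpow_of_nonneg (norm_nonneg _) hq]

theorem IqX_pos (hN : IsNorm N) (hn : 0 < n) {q : ℝ} (hq : 0 < q) : 0 < IqX q N := by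
  have : Nonempty (Fin n) := ⟨⟨0, hn⟩⟩
  have := hN.isProbabilityMeasure_unitBallMeasure
  rw [← ENNReal.ofReal_pos, ← hN.eLpNorm'_norm_unitBallMeasure hq.le, pos_iff_ne_zero, Ne,
    eLpNorm'_eq_zero_iff hq measurable_norm.ennreal_ofReal.aestronglyMeasurable]
  intro hzero
  have hne : ∀ᵐ w ∂unitBallMeasure N, w ≠ 0 :=
    ProbabilityTheory.cond_absolutelyContinuous.ae_le (Measure.ae_ne volume 0)
  obtain ⟨w, hw, hw0⟩ := (hzero.and hne).exists
  simp [hw0] at hw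

end IsNorm

theorem lintegral_Ioi_div_rpow_eq (Φ : ℝ → ℝ≥0∞) {q : ℝ} (hq : 0 ≤ q) :
    ∫⁻ t in Ioi (0 : ℝ), Φ t / ENNReal.ofReal (t ^ (q + 1)) =
      ∫⁻ y : ℝ, ENNReal.ofReal (Real.exp (-y)) ^ q * Φ (Real.exp y) := by
  rw [← Real.range_exp, ← image_univ, lintegral_image_eq_lintegral_abs_deriv_mul .univ
    (fun y _ => (Real.hasDerivAt_exp y).hasDerivWithinAt) Real.exp_injective.injOn,
    Measure.restrict_univ]
  refine lintegral_congr fun y => ?_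
  rw [ENNReal.div_eq_inv_mul, ← mul_assoc, abs_of_pos (Real.exp_pos y),
    ENNReal.ofReal_rpow_of_nonneg (Real.exp_pos _).le hq,
    ← ENNReal.ofReal_inv_of_pos (by positivity), ← ENNReal.ofReal_mul (by positivity),
    ← Real.exp_mul, ← Real.exp_mul, ← Real.exp_neg, ← Real.exp_add]
  ring_nf

variable {Y : Type*} [NormedAddCommGroup Y]

/-- The norm `(∫_{ℝⁿ} ∫_0^∞ ⨍_{B_X} ‖Φ w (log t) x‖^q t^{-q-1} dw dt dx)^{1/q}`, written as an
iterated `L_q` norm in the logarithmic scale `y = log t`. -/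
def logScaleNorm (N : 𝔼 n → ℝ) (q : ℝ) (Φ : 𝔼 n → ℝ → 𝔼 n → Y) : ℝ≥0∞ :=
  eLpNorm' (fun w => eLpNorm' (fun y : ℝ => ENNReal.ofReal (Real.exp (-y)) *
    eLpNorm' (Φ w y) q volume) q volume) q (unitBallMeasure N)

theorem logScaleNorm_eq_eLpNorm'_prod (hN : IsNorm N) {q : ℝ} (hq : 0 < q)
    {Φ : 𝔼 n → ℝ → 𝔼 n → Y}
    (hΦ : Measurable fun p : 𝔼 n × ℝ × 𝔼 n => ‖Φ p.1 p.2.1 p.2.2‖ₑ) :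
    logScaleNorm N q Φ = eLpNorm' (fun p : 𝔼 n × ℝ × 𝔼 n => ENNReal.ofReal (Real.exp (-p.2.1)) *
      ‖Φ p.1 p.2.1 p.2.2‖ₑ) q ((unitBallMeasure N).prod (volume.prod volume)) := by
  have := hN.isProbabilityMeasure_unitBallMeasure
  have hmeas : Measurable fun p : 𝔼 n × ℝ × 𝔼 n =>
      ENNReal.ofReal (Real.exp (-p.2.1)) * ‖Φ p.1 p.2.1 p.2.2‖ₑ :=
    Measurable.mul (by fun_prop) hΦ
  rw [eLpNorm'_prod _ _ hq hmeas, logScaleNorm]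
  congr 1 with w
  rw [eLpNorm'_prod _ _ hq (hmeas.comp measurable_prodMk_left)]
  congr 1 with y
  have hslice : Measurable fun x => ‖Φ w y x‖ₑ :=
    hΦ.comp (by fun_prop : Measurable fun x : 𝔼 n => (w, y, x))
  dsimp only
  rw [eLpNorm'_const_mul _ hq _ hslice, eLpNorm'_enorm]

theorem logScaleNorm_add_le (hN : IsNorm N) {q : ℝ} (hq : 1 ≤ q) {Φ Ψ : 𝔼 n → ℝ → 𝔼 n → Y}
    (hΦ : StronglyMeasurable fun p : 𝔼 n × ℝ × 𝔼 n => Φ p.1 p.2.1 p.2.2)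
    (hΨ : StronglyMeasurable fun p : 𝔼 n × ℝ × 𝔼 n => Ψ p.1 p.2.1 p.2.2) :
    logScaleNorm N q (fun w y x => Φ w y x + Ψ w y x) ≤
      logScaleNorm N q Φ + logScaleNorm N q Ψ := by
  have hq0 : 0 < q := by linarith
  have hexp : Measurable fun p : 𝔼 n × ℝ × 𝔼 n => ENNReal.ofReal (Real.exp (-p.2.1)) := by fun_prop
  rw [logScaleNorm_eq_eLpNorm'_prod hN hq0 (hΦ.add hΨ).enorm,
    logScaleNorm_eq_eLpNorm'_prod hN hq0 hΦ.enorm, logScaleNorm_eq_eLpNorm'_prod hN hq0 hΨ.enorm]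
  refine (eLpNorm'_le_of_enorm_le _ hq0.le fun p => ?_).trans
    (eLpNorm'_add_le (hexp.mul hΦ.enorm).aestronglyMeasurable
      (hexp.mul hΨ.enorm).aestronglyMeasurable hq)
  rw [Pi.add_apply, ← mul_add]
  exact mul_le_mul_right (enorm_add_le _ _) _

theorem lintegral_lintegral_average_eq_logScaleNorm (hN : IsNorm N) {q : ℝ} (hq : 0 < q)
    {F : ℝ → 𝔼 n → 𝔼 n → Y} (hF : StronglyMeasurable fun p : 𝔼 n × ℝ × 𝔼 n =>
      F (Real.exp p.2.1) p.2.2 (p.2.2 + Real.exp p.2.1 • p.1)) :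
    (∫⁻ x, ∫⁻ t in Ioi (0 : ℝ), ((∫⁻ y in {y | N (y - x) ≤ t}, ‖F t x y‖ₑ ^ q) /
        volume {y | N (y - x) ≤ t}) / ENNReal.ofReal (t ^ (q + 1))) ^ (1 / q) =
      logScaleNorm N q fun w y x => F (Real.exp y) x (x + Real.exp y • w) := by
  have := hN.isProbabilityMeasure_unitBallMeasure
  have hmeas : Measurable fun p : 𝔼 n × ℝ × 𝔼 n => (ENNReal.ofReal (Real.exp (-p.2.1)) *
      ‖F (Real.exp p.2.1) p.2.2 (p.2.2 + Real.exp p.2.1 • p.1)‖ₑ) ^ q :=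
    (Measurable.mul (by fun_prop) hF.enorm).pow_const q
  rw [logScaleNorm_eq_eLpNorm'_prod hN hq hF.enorm, eLpNorm'_eq_lintegral_enorm]
  simp only [enorm_eq_self]
  rw [lintegral_prod_symm' _ hmeas, lintegral_prod_symm' _ hmeas.lintegral_prod_left']
  congr 1
  refine lintegral_congr fun x => ?_
  rw [lintegral_Ioi_div_rpow_eq _ hq.le]
  refine lintegral_congr fun y => ?_
  simp only [ENNReal.mul_rpow_of_nonneg _ _ hq.le]
  rw [lintegral_const_mul' _ _ (ENNReal.rpow_ne_top_of_nonneg hq.le ENNReal.ofReal_ne_top),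
    hN.lintegral_unitBallMeasure_add_smul (Real.exp_pos y) x fun z => ‖F (Real.exp y) x z‖ₑ ^ q]

end Averages

/-! ### The Dorronsoro estimate -/

section Dorronsoro

theorem div_sqrt_div {a : ℝ} (ha : 0 ≤ a) (b : ℝ) : a / √(a / b) = √(a * b) := by
  rw [Real.sqrt_div ha, Real.sqrt_mul ha, div_div_eq_mul_div, mul_comm a, mul_div_assoc,
    Real.div_sqrt, mul_comm]

theorem sqrt_div_mul_self {a : ℝ} (ha : 0 ≤ a) (b : ℝ) : √(a / b) * b = √(a * b) := by
  rw [Real.sqrt_div ha, Real.sqrt_mul ha, div_mul_eq_mul_div, mul_div_assoc, Real.div_sqrt]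

variable {n : ℕ} {Y : Type*} [NormedAddCommGroup Y]

theorem squareFunctionBound_le {q m : ℝ} (hq : 1 ≤ q) (hm : 0 ≤ m) (L : ℝ) (f : 𝔼 n → Y) :
    squareFunctionBound q m L f ≤
      ENNReal.ofReal (2 * (m * L)) * volume (tsupport f) ^ (1 / q) := by
  have htwo : (2 : ℝ≥0∞) ^ (1 / q) ≤ 2 := by
    refine (ENNReal.rpow_le_rpow_of_exponent_le one_le_two
      ((div_le_one (by linarith)).2 hq)).trans_eq (ENNReal.rpow_one 2)
  calc squareFunctionBound q m L f
      = ENNReal.ofReal (m * L) * (2 ^ (1 / q) * volume (tsupport f) ^ (1 / q)) := by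
        rw [squareFunctionBound, ENNReal.mul_rpow_of_nonneg _ _ (by positivity),
          ENNReal.ofReal_mul hm]
    _ ≤ ENNReal.ofReal (m * L) * (2 * volume (tsupport f) ^ (1 / q)) := by gcongr
    _ = ENNReal.ofReal (2 * (m * L)) * volume (tsupport f) ^ (1 / q) := by
        rw [ENNReal.ofReal_mul zero_le_two, ENNReal.ofReal_ofNat]
        ring

variable [NormedSpace ℝ Y]

theorem taylor1_add_eq (g : 𝔼 n → Y) (x v : 𝔼 n) : taylor1 g x (x + v) = g x + fderiv ℝ g x v := by
  have hbasis : ∑ j, v j • EuclideanSpace.single j (1 : ℝ) = v := by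
    simpa using (EuclideanSpace.basisFun (Fin n) ℝ).sum_repr v
  conv_rhs => rw [← hbasis, map_sum]
  simp only [taylor1, add_sub_cancel_left, map_smul]

theorem sub_taylor1_heat_eq (f : 𝔼 n → Y) (s t : ℝ) (x w : 𝔼 n) :
    f (x + t • w) - taylor1 (heat s f) x (x + t • w) =
      heatTaylorRemainder f s t w x + (f (x + t • w) - heat s f (x + t • w)) := by
  rw [taylor1_add_eq, map_smul, heatTaylorRemainder, heatDeriv]
  abel

namespace CompactLip

variable {N : 𝔼 n → ℝ} {L : ℝ} {f : 𝔼 n → Y}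

theorem stronglyMeasurable_heatTaylorRemainder_exp (hf : CompactLip N L f) {γ : ℝ} (hγ : 0 < γ) :
    StronglyMeasurable fun p : 𝔼 n × ℝ × 𝔼 n =>
      heatTaylorRemainder f (γ * Real.exp (2 * p.2.1)) (Real.exp p.2.1) p.1 p.2.2 := by
  have hexp : Measurable fun p : 𝔼 n × ℝ × 𝔼 n => Real.exp p.2.1 := by fun_prop
  exact ((stronglyMeasurable_heat (by fun_prop) (by fun_prop) hf.stronglyMeasurable).sub
    (stronglyMeasurable_heat (by fun_prop) (by fun_prop) hf.stronglyMeasurable)).sub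
    (hexp.stronglyMeasurable.smul (hf.stronglyMeasurable_heatDeriv (by fun_prop)
      (fun _ => by positivity) (by fun_prop) measurable_fst))

theorem stronglyMeasurable_sub_heat_exp (hf : CompactLip N L f) (γ : ℝ) :
    StronglyMeasurable fun p : 𝔼 n × ℝ × 𝔼 n => f (p.2.2 + Real.exp p.2.1 • p.1) -
      heat (γ * Real.exp (2 * p.2.1)) f (p.2.2 + Real.exp p.2.1 • p.1) :=
  (hf.stronglyMeasurable.comp_measurable (by fun_prop)).sub
    (stronglyMeasurable_heat (by fun_prop) (by fun_prop) hf.stronglyMeasurable)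

theorem lintegral_sub_taylor1_heat_eq_logScaleNorm (hf : CompactLip N L f) {q : ℝ} (hq : 0 < q)
    {γ : ℝ} (hγ : 0 < γ) :
    (∫⁻ x, ∫⁻ t in Ioi (0 : ℝ), ((∫⁻ y in {y | N (y - x) ≤ t},
        ‖f y - taylor1 (heat (γ * t ^ 2) f) x y‖ₑ ^ q) / volume {y | N (y - x) ≤ t}) /
          ENNReal.ofReal (t ^ (q + 1))) ^ (1 / q) =
      logScaleNorm N q fun w y x => f (x + Real.exp y • w) -
        taylor1 (heat (γ * Real.exp (2 * y)) f) x (x + Real.exp y • w) := by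
  have hsq (y : ℝ) : Real.exp y ^ 2 = Real.exp (2 * y) := by
    rw [← Real.exp_nat_mul, Nat.cast_ofNat]
  simp only [← hsq]
  refine lintegral_lintegral_average_eq_logScaleNorm hf.isNorm hq
    (F := fun t x y => f y - taylor1 (heat (γ * t ^ 2) f) x y) ?_
  simp only [hsq, sub_taylor1_heat_eq]
  exact (hf.stronglyMeasurable_heatTaylorRemainder_exp hγ).add
    (hf.stronglyMeasurable_sub_heat_exp γ)

variable [CompleteSpace Y]

theorem logScaleNorm_heatTaylorRemainder_le (hf : CompactLip N L f) {q m : ℝ} (hq : 1 ≤ q)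
    (hY : MartCotypeBound q Y m) {γ : ℝ} (hγ : 0 < γ) :
    logScaleNorm N q (fun w y => heatTaylorRemainder f (γ * Real.exp (2 * y)) (Real.exp y) w) ≤
      ENNReal.ofReal (24 * (IqX q N / √γ)) * squareFunctionBound q m L f := by
  have hq0 : 0 < q := by linarith
  have hball : ∀ᵐ w ∂unitBallMeasure N, eLpNorm' (fun y : ℝ => ENNReal.ofReal (Real.exp (-y)) *
      eLpNorm' (heatTaylorRemainder f (γ * Real.exp (2 * y)) (Real.exp y) w) q volume) q volume ≤
      ENNReal.ofReal (24 / √γ) * squareFunctionBound q m L f * ENNReal.ofReal ‖w‖ := by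
    filter_upwards [hf.isNorm.ae_unitBallMeasure_le_one] with w hw
    calc _ ≤ ENNReal.ofReal (24 * ‖w‖ / √γ) *
          (squareFunctionBound q m L f * ENNReal.ofReal (N w)) :=
          hf.eLpNorm'_exp_neg_mul_heatTaylorRemainder_le hq hY w hγ
      _ ≤ ENNReal.ofReal (24 * ‖w‖ / √γ) * (squareFunctionBound q m L f * 1) := by
          gcongr
          exact ENNReal.ofReal_le_one.2 hw
      _ = ENNReal.ofReal (24 / √γ) * squareFunctionBound q m L f * ENNReal.ofReal ‖w‖ := by
          rw [mul_div_right_comm, ENNReal.ofReal_mul (by positivity)]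
          ring
  refine (eLpNorm'_mono_enorm_ae (g := fun w => ENNReal.ofReal (24 / √γ) *
    squareFunctionBound q m L f * ENNReal.ofReal ‖w‖) hq0.le hball).trans_eq ?_
  rw [eLpNorm'_const_mul _ hq0 _ (by fun_prop), hf.isNorm.eLpNorm'_norm_unitBallMeasure hq0.le,
    ← mul_div_assoc, mul_div_right_comm, ENNReal.ofReal_mul (by positivity)]
  ring

theorem logScaleNorm_sub_heat_le (hf : CompactLip N L f) (hn : 0 < n) {q m : ℝ} (hq : 1 ≤ q)
    (hY : MartCotypeBound q Y m) {γ : ℝ} (hγ : 0 < γ) :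
    logScaleNorm N q (fun w y x => f (x + Real.exp y • w) -
        heat (γ * Real.exp (2 * y)) f (x + Real.exp y • w)) ≤
      ENNReal.ofReal (128 * (√γ * (√n * MX N))) * squareFunctionBound q m L f := by
  have := hf.isNorm.isProbabilityMeasure_unitBallMeasure
  have htranslate (w : 𝔼 n) (y : ℝ) : eLpNorm' (fun x => f (x + Real.exp y • w) -
      heat (γ * Real.exp (2 * y)) f (x + Real.exp y • w)) q volume =
      eLpNorm' (fun x => f x - heat (γ * Real.exp (2 * y)) f x) q volume := by
    simpa only [sub_neg_eq_add] using eLpNorm'_comp_sub_right volume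
      (fun x => f x - heat (γ * Real.exp (2 * y)) f x) q (-(Real.exp y • w))
  simp only [logScaleNorm, htranslate]
  rw [eLpNorm'_const_of_isProbabilityMeasure _ (by linarith), enorm_eq_self]
  refine (hf.eLpNorm'_exp_neg_mul_sub_heat_le hn hq hY hγ).trans_eq ?_
  rw [show 128 * (√γ * (√n * MX N)) = 16 * √γ * (8 * √n * MX N) by ring,
    ENNReal.ofReal_mul (p := 16 * √γ) (by positivity)]
  ring

theorem logScaleNorm_sub_taylor1_heat_le (hf : CompactLip N L f) (hn : 0 < n) {q m : ℝ}
    (hq : 1 ≤ q) (hY : MartCotypeBound q Y m) {γ : ℝ} (hγ : 0 < γ) :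
    logScaleNorm N q (fun w y x => f (x + Real.exp y • w) -
        taylor1 (heat (γ * Real.exp (2 * y)) f) x (x + Real.exp y • w)) ≤
      ENNReal.ofReal (24 * (IqX q N / √γ) + 128 * (√γ * (√n * MX N))) *
        squareFunctionBound q m L f := by
  have hI := (hf.isNorm.IqX_pos hn (by linarith : 0 < q)).le
  have hM := (hf.isNorm.MX_pos hn).le
  simp only [sub_taylor1_heat_eq]
  rw [ENNReal.ofReal_add (by positivity) (by positivity), add_mul]
  exact (logScaleNorm_add_le hf.isNorm hq (hf.stronglyMeasurable_heatTaylorRemainder_exp hγ)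
    (hf.stronglyMeasurable_sub_heat_exp γ)).trans
    (add_le_add (hf.logScaleNorm_heatTaylorRemainder_le hq hY hγ)
      (hf.logScaleNorm_sub_heat_le hn hq hY hγ))

theorem logScaleNorm_sub_taylor1_heat_optimal_le (hf : CompactLip N L f) (hn : 0 < n) {q m : ℝ}
    (hq : 1 ≤ q) (hm : 0 ≤ m) (hY : MartCotypeBound q Y m) :
    logScaleNorm N q (fun w y x => f (x + Real.exp y • w) -
        taylor1 (heat (IqX q N / (√n * MX N) * Real.exp (2 * y)) f) x (x + Real.exp y • w)) ≤
      ENNReal.ofReal (304 * (n : ℝ) ^ ((1 : ℝ) / 4) * m * √(IqX q N * MX N) * L) *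
        volume (tsupport f) ^ (1 / q) := by
  have hn0 : (0 : ℝ) < n := Nat.cast_pos.2 hn
  have hI := hf.isNorm.IqX_pos hn (by linarith : 0 < q)
  have hM := hf.isNorm.MX_pos hn
  have hb : 0 < √n * MX N := by positivity
  have hroot : √(√n) = (n : ℝ) ^ ((1 : ℝ) / 4) := by
    rw [Real.sqrt_eq_rpow, Real.sqrt_eq_rpow, ← Real.rpow_mul hn0.le]
    norm_num
  refine (hf.logScaleNorm_sub_taylor1_heat_le hn hq hY (div_pos hI hb)).trans ?_
  refine (mul_le_mul_right (squareFunctionBound_le hq hm L f) _).trans_eq ?_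
  rw [div_sqrt_div hI.le, sqrt_div_mul_self hI.le, ← mul_assoc,
    ← ENNReal.ofReal_mul (by positivity), mul_left_comm (IqX q N), Real.sqrt_mul (by positivity),
    hroot]
  ring_nf

end CompactLip

end Dorronsoro

/-- **Theorem (vector-valued Dorronsoro estimate for the heat semigroup).** -/
theorem statement2 :
    ∃ κ : ℝ, 2 ≤ κ ∧
      ∀ (q : ℝ), 2 ≤ q → ∀ (n : ℕ), 0 < n →
      ∀ (N : EuclideanSpace ℝ (Fin n) → ℝ), IsNorm N →
      ∀ (Y : Type u) [NormedAddCommGroup Y] [NormedSpace ℝ Y] [CompleteSpace Y],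
      ∀ m : ℝ, 0 ≤ m → MartCotypeBound q Y m →
      ∀ (f : EuclideanSpace ℝ (Fin n) → Y) (L : ℝ), 0 ≤ L →
        HasCompactSupport f → (∀ x y, ‖f x - f y‖ ≤ L * N (x - y)) →
        (∫⁻ x, ∫⁻ t in Set.Ioi (0 : ℝ),
            ((∫⁻ y in {y : EuclideanSpace ℝ (Fin n) | N (y - x) ≤ t},
                (‖f y - taylor1 (heat (IqX q N / (Real.sqrt n * MX N) * t ^ 2) f) x y‖₊ : ℝ≥0∞) ^ q)
              / volume {y : EuclideanSpace ℝ (Fin n) | N (y - x) ≤ t})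
              / ENNReal.ofReal (t ^ (q + 1))) ^ (1 / q)
          ≤ ENNReal.ofReal (κ * (n : ℝ) ^ ((1 : ℝ) / 4) * m * Real.sqrt (IqX q N * MX N) * L)
              * volume (tsupport f) ^ (1 / q) := by
  refine ⟨304, by norm_num, fun q hq n hn N hN Y _ _ _ m hm hY f L hL hfc hLip => ?_⟩
  have hf : CompactLip N L f := ⟨hN, hL, hfc, hLip⟩
  have hγ : 0 < IqX q N / (Real.sqrt n * MX N) := by
    have : (0 : ℝ) < n := Nat.cast_pos.2 hn
    have hI := hN.IqX_pos hn (by linarith : 0 < q)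
    have hM := hN.MX_pos hn
    positivity
  calc _ = _ := hf.lintegral_sub_taylor1_heat_eq_logScaleNorm (by linarith) hγ
    _ ≤ _ := hf.logScaleNorm_sub_taylor1_heat_optimal_le hn (by linarith) hm hY
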